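/- For every integer d ≥ 2, the laws of W_n := n^{-d} ∑_{1≤i₁,…,i_d≤n} 1_{gcd(X_{i₁},…,X_{i_d})=1} satisfy a large deviation principle with speed n and rate function I(x) = inf{ ∫_{[0,1]} log(dμ/dν) dμ : μ a Borel probability measure on [0,1] with ∫⋯∫_{[0,1]^d} f(x₁,…,x_d) μ(dx₁)⋯μ(dx_d) = x }, the relative entropy being +∞ when μ is not absolutely continuous with respect to ν: for every Borel set A ⊆ [0,1], −inf_{x∈A°} I(x) ≤ liminf_{n→∞} (1/n) log P(W_n ∈ A) ≤ limsup_{n→∞} (1/n) log P(W_n ∈ A) ≤ −inf_{x∈closure(A)} I(x). -/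

import Mathlib

open MeasureTheory ProbabilityTheory Filter Real
open scoped ENNReal

/-- The joint law of `n` i.i.d. random variables, each uniformly distributed on
`{1, 2, …, n}` (the coordinates `ω ↦ ω i` are the random variables `X_i`). -/
noncomputable def unifVec (n : ℕ) : Measure (Fin n → ℕ) :=
  Measure.pi fun _ => uniformOn (Set.Icc 1 n)

/-- `digit i a` is the `(i+1)`-st digit of the binary expansion of `a`
(the finite expansion is selected for dyadic rationals). -/
noncomputable def digit (i : ℕ) (a : ℝ) : ℕ := ⌊a * 2 ^ (i + 1)⌋.toNat % 2

/-- `f(x₁,…,x_d) = 1` if there is no position at which the binary expansions of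
`x₁,…,x_d` all have digit `1`, and `f(x₁,…,x_d) = 0` otherwise. -/
noncomputable def coprimeKernelD (d : ℕ) (x : Fin d → ℝ) : ℝ :=
  Set.indicator {y : Fin d → ℝ | ∀ i : ℕ, ¬(∀ t : Fin d, digit i (y t) = 1)}
    (fun _ => (1 : ℝ)) x

open Classical in
/-- Relative entropy `∫ log(dμ/dν) dμ`, with value `+∞` when `μ` is not
absolutely continuous with respect to `ν` (or when the defining integral is
infinite); for `μ ≪ ν` it is computed as `∫ (g log g − g + 1) dν` with
`g = dμ/dν`, whose integrand is nonnegative. -/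
noncomputable def relEntropy {α : Type*} [MeasurableSpace α] (μ ν : Measure α) : EReal :=
  if μ ≪ ν then
    ((∫⁻ a, ENNReal.ofReal ((μ.rnDeriv ν a).toReal * Real.log (μ.rnDeriv ν a).toReal
        - (μ.rnDeriv ν a).toReal + 1) ∂ν : ℝ≥0∞) : EReal)
  else ⊤

/-- The rate function
`I(x) = inf { ∫ log(dμ/dν) dμ : μ prob. measure on [0,1], ∫⋯∫ f dμ⋯dμ = x }`
(the infimum of the empty set being `+∞`); the `d`-fold integral is written as
an integral against the product measure `μ^{⊗d}`. -/
noncomputable def coprimeRateD (d : ℕ) (ν : Measure ℝ) (x : ℝ) : EReal :=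
  ⨅ (μ : Measure ℝ) (_ : IsProbabilityMeasure μ ∧ μ (Set.Icc 0 1) = 1 ∧
      (∫ y, coprimeKernelD d y ∂(Measure.pi fun _ : Fin d => μ)) = x), relEntropy μ ν

lemma fy_pointwise (g s : ℝ) (hg : 0 ≤ g) :
    s * g - Real.exp s + 1 ≤ g * Real.log g - g + 1 := by
  rcases hg.eq_or_lt with h | h
  · subst h; simp; positivity
  · have h1 := Real.add_one_le_exp (s - Real.log g)
    have h2 : Real.exp s = g * Real.exp (s - Real.log g) := by
      rw [Real.exp_sub, Real.exp_log h]; field_simp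
    rw [h2]; nlinarith

lemma relEntropy_ac {α : Type*} [MeasurableSpace α] {μ ν : Measure α} {h : ℝ}
    (H : relEntropy μ ν ≤ (h : EReal)) : μ ≪ ν := by
  unfold relEntropy at H
  by_contra hc
  rw [if_neg hc] at H
  simp at H

lemma relEntropy_lintegral {α : Type*} [MeasurableSpace α] {μ ν : Measure α} {h : ℝ}
    (H : relEntropy μ ν ≤ (h : EReal)) :
    0 ≤ h ∧ ∫⁻ a, ENNReal.ofReal ((μ.rnDeriv ν a).toReal * Real.log (μ.rnDeriv ν a).toReal
        - (μ.rnDeriv ν a).toReal + 1) ∂ν ≤ ENNReal.ofReal h := by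
  have hac := relEntropy_ac H
  unfold relEntropy at H
  rw [if_pos hac] at H
  have h0 : 0 ≤ h := by
    have : ((0:ℝ):EReal) ≤ (h:EReal) := le_trans (by exact EReal.coe_ennreal_nonneg _) H
    exact_mod_cast this
  refine ⟨h0, ?_⟩
  have : ((h:ℝ):EReal) = ((ENNReal.ofReal h : ℝ≥0∞) : EReal) := by
    rw [EReal.coe_ennreal_ofReal, max_eq_left h0]
  rw [this] at H
  exact EReal.coe_ennreal_le_coe_ennreal_iff.1 H

lemma relEntropy_fy {α : Type*} [MeasurableSpace α] {μ ν : Measure α}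
    [IsProbabilityMeasure μ] [IsProbabilityMeasure ν] {h : ℝ}
    (H : relEntropy μ ν ≤ (h : EReal)) (s : α → ℝ) (hs : Measurable s) (C : ℝ)
    (hC : ∀ a, |s a| ≤ C) :
    ∫ a, s a ∂μ - ∫ a, (Real.exp (s a) - 1) ∂ν ≤ h := by
  have hac := relEntropy_ac H
  obtain ⟨h0, hl⟩ := relEntropy_lintegral H
  have hi1 : Integrable s μ := Integrable.of_bound hs.aestronglyMeasurable C
    (ae_of_all _ hC)
  have hi2 : Integrable (fun a => (μ.rnDeriv ν a).toReal * s a) ν := by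
    have := (integrable_rnDeriv_smul_iff (f := s) hac).2 hi1
    simpa using this
  have hi3 : Integrable (fun a => Real.exp (s a) - 1) ν := by
    refine Integrable.of_bound (by fun_prop) (Real.exp C + 1) (ae_of_all _ fun a => ?_)
    have h1 : Real.exp (s a) ≤ Real.exp C := Real.exp_le_exp.2 (le_trans (le_abs_self _) (hC a))
    have h2 := Real.exp_pos (s a)
    rw [Real.norm_eq_abs, abs_le]; constructor <;> linarith
  have e1 : ∫ a, s a ∂μ = ∫ a, (μ.rnDeriv ν a).toReal * s a ∂ν := by
    rw [← integral_rnDeriv_smul hac]; simp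
  rw [e1, ← integral_sub hi2 hi3]
  have e2 : ∫ a, ((μ.rnDeriv ν a).toReal * s a - (Real.exp (s a) - 1)) ∂ν ≤
      (∫⁻ a, ENNReal.ofReal ((μ.rnDeriv ν a).toReal * s a - (Real.exp (s a) - 1)) ∂ν).toReal := by
    have := integral_eq_lintegral_pos_part_sub_lintegral_neg_part (hi2.sub hi3)
    simp only [Pi.sub_apply] at this
    rw [this]
    simp
  refine e2.trans (ENNReal.toReal_le_of_le_ofReal h0 (le_trans (lintegral_mono fun a => ?_) hl))
  apply ENNReal.ofReal_le_ofReal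
  have := fy_pointwise (μ.rnDeriv ν a).toReal (s a) ENNReal.toReal_nonneg
  linarith

/-- uniform absolute continuity -/
lemma relEntropy_set {α : Type*} [MeasurableSpace α] {μ ν : Measure α}
    [IsProbabilityMeasure μ] [IsProbabilityMeasure ν] {h : ℝ}
    (H : relEntropy μ ν ≤ (h : EReal)) (E : Set α) (hE : MeasurableSet E) (l : ℝ) (hl : 0 < l) :
    μ.real E ≤ h / l + (Real.exp l / l) * ν.real E := by
  have := relEntropy_fy H (E.indicator fun _ => l) (by exact measurable_const.indicator hE) l (by
    intro a; by_cases ha : a ∈ E <;> simp [ha, abs_of_pos hl, hl.le])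
  have e1 : ∫ a, (E.indicator fun _ => l) a ∂μ = l * μ.real E := by
    rw [integral_indicator hE]; simp [mul_comm]
  have e2 : ∫ a, (Real.exp ((E.indicator fun _ => l) a) - 1) ∂ν = (Real.exp l - 1) * ν.real E := by
    have : (fun a => Real.exp ((E.indicator fun _ => l) a) - 1)
        = E.indicator fun _ => (Real.exp l - 1) := by
      ext a; by_cases ha : a ∈ E <;> simp [ha]
    rw [this, integral_indicator hE]; simp [mul_comm]
  rw [e1, e2] at this
  have h3 : 0 ≤ ν.real E := measureReal_nonneg
  rw [div_add' _ _ _ hl.ne', le_div_iff₀ hl]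
  field_simp
  nlinarith

lemma relEntropy_prod {α : Type*} [MeasurableSpace α] {μ ν : Measure α}
    [IsProbabilityMeasure μ] [IsProbabilityMeasure ν] {h : ℝ}
    (H : relEntropy μ ν ≤ (h : EReal)) (E : Set (α × α)) (hE : MeasurableSet E)
    (l : ℝ) (hl : 0 < l) (l' : ℝ) (hl' : 0 < l') :
    (μ.prod μ).real E ≤
      h / l + (Real.exp l / l) * (h / l' + (Real.exp l' / l') * (ν.prod ν).real E) := by
  have key : ∀ (ρ σ : Measure α) [IsProbabilityMeasure ρ] [IsProbabilityMeasure σ],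
      (ρ.prod σ).real E = ∫ x, σ.real (Prod.mk x ⁻¹' E) ∂ρ := by
    intro ρ σ _ _
    rw [measureReal_def, Measure.prod_apply hE, integral_eq_lintegral_of_nonneg_ae]
    · congr 1
      apply lintegral_congr
      intro x; rw [measureReal_def, ENNReal.ofReal_toReal (measure_ne_top _ _)]
    · exact ae_of_all _ fun x => measureReal_nonneg
    · exact (measurable_measure_prodMk_left hE).ennreal_toReal.aestronglyMeasurable
  have key' : ∀ (ρ σ : Measure α) [IsProbabilityMeasure ρ] [IsProbabilityMeasure σ],
      (ρ.prod σ).real E = ∫ x, ρ.real ((fun y => (y, x)) ⁻¹' E) ∂σ := by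
    intro ρ σ _ _
    rw [measureReal_def, Measure.prod_apply_symm hE, integral_eq_lintegral_of_nonneg_ae]
    · congr 1
      apply lintegral_congr
      intro x; rw [measureReal_def, ENNReal.ofReal_toReal (measure_ne_top _ _)]
    · exact ae_of_all _ fun x => measureReal_nonneg
    · exact (measurable_measure_prodMk_right hE).ennreal_toReal.aestronglyMeasurable
  have int1 : ∀ (ρ σ : Measure α) [IsProbabilityMeasure ρ] [IsProbabilityMeasure σ],
      Integrable (fun x => σ.real (Prod.mk x ⁻¹' E)) ρ := by
    intro ρ σ _ _
    refine Integrable.of_bound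
      (measurable_measure_prodMk_left hE).ennreal_toReal.aestronglyMeasurable 1
      (ae_of_all _ fun x => ?_)
    rw [Real.norm_eq_abs, abs_of_nonneg measureReal_nonneg]; exact measureReal_le_one
  have int2 : ∀ (ρ σ : Measure α) [IsProbabilityMeasure ρ] [IsProbabilityMeasure σ],
      Integrable (fun x => ρ.real ((fun y => (y, x)) ⁻¹' E)) σ := by
    intro ρ σ _ _
    refine Integrable.of_bound
      (measurable_measure_prodMk_right hE).ennreal_toReal.aestronglyMeasurable 1
      (ae_of_all _ fun x => ?_)
    rw [Real.norm_eq_abs, abs_of_nonneg measureReal_nonneg]; exact measureReal_le_one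
  have s1 : (μ.prod μ).real E ≤ h / l + (Real.exp l / l) * (μ.prod ν).real E := by
    rw [key μ μ, key μ ν]
    calc _ ≤ ∫ x, (h / l + (Real.exp l / l) * ν.real (Prod.mk x ⁻¹' E)) ∂μ := by
          apply integral_mono (int1 _ _)
            ((integrable_const _).add ((int1 _ _).const_mul _))
          intro x
          exact relEntropy_set H _ (measurable_prodMk_left hE) l hl
      _ = _ := by
          rw [integral_add (integrable_const _) ((int1 _ _).const_mul _), integral_const_mul]
          simp
  have s2 : (μ.prod ν).real E ≤ h / l' + (Real.exp l' / l') * (ν.prod ν).real E := by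
    rw [key' μ ν, key' ν ν]
    calc _ ≤ ∫ x, (h / l' + (Real.exp l' / l') * ν.real ((fun y => (y, x)) ⁻¹' E)) ∂ν := by
          apply integral_mono (int2 _ _)
            ((integrable_const _).add ((int2 _ _).const_mul _))
          intro x
          exact relEntropy_set H _ (measurable_prodMk_right hE) l' hl'
      _ = _ := by
          rw [integral_add (integrable_const _) ((int2 _ _).const_mul _), integral_const_mul]
          simp
  refine s1.trans ?_
  gcongr

/-- converse of the Fenchel-Young bound -/
lemma relEntropy_le_of_fy {α : Type*} [MeasurableSpace α] {μ ν : Measure α}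
    [IsProbabilityMeasure μ] [IsProbabilityMeasure ν] {h : ℝ} (hac : μ ≪ ν)
    (H : ∀ s : SimpleFunc α ℝ, ∫ a, s a ∂μ - ∫ a, (Real.exp (s a) - 1) ∂ν ≤ h) :
    relEntropy μ ν ≤ (h : EReal) := by
  have h0 : 0 ≤ h := by simpa using H 0
  have eh : ((h:ℝ):EReal) = ((ENNReal.ofReal h : ℝ≥0∞) : EReal) := by
    rw [EReal.coe_ennreal_ofReal, max_eq_left h0]
  unfold relEntropy
  rw [if_pos hac, eh, EReal.coe_ennreal_le_coe_ennreal_iff]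
  set g : α → ℝ := fun a => (μ.rnDeriv ν a).toReal with hgdef
  have hgm : Measurable g := (Measure.measurable_rnDeriv μ ν).ennreal_toReal
  have hg0 : ∀ a, 0 ≤ g a := fun a => ENNReal.toReal_nonneg
  let P : α → ℝ≥0∞ := fun a => ENNReal.ofReal (Real.log (g a))
  let N : α → ℝ≥0∞ := fun a => if g a = 0 then ⊤ else ENNReal.ofReal (-Real.log (g a))
  have hP : Measurable P := by fun_prop
  have hN : Measurable N := Measurable.ite (hgm (measurableSet_singleton 0)) (by fun_prop)
    (by fun_prop)
  let s : ℕ → SimpleFunc α ℝ := fun n =>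
    (SimpleFunc.eapprox P n).map ENNReal.toReal - (SimpleFunc.eapprox N n).map ENNReal.toReal
  have hsv : ∀ n a, s n a = (SimpleFunc.eapprox P n a).toReal - (SimpleFunc.eapprox N n a).toReal :=
    fun n a => rfl
  have leP : ∀ n a, SimpleFunc.eapprox P n a ≤ P a := fun n a => by
    rw [← SimpleFunc.iSup_eapprox_apply hP a]; exact le_iSup (fun n => SimpleFunc.eapprox P n a) n
  have leN : ∀ n a, SimpleFunc.eapprox N n a ≤ N a := fun n a => by
    rw [← SimpleFunc.iSup_eapprox_apply hN a]; exact le_iSup (fun n => SimpleFunc.eapprox N n a) n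
  let u : ℕ → α → ℝ := fun n a => g a * s n a - (Real.exp (s n a) - 1)
  have hu : ∀ n a, 0 ≤ u n a ∧
      Tendsto (fun n => u n a) atTop (nhds (g a * Real.log (g a) - g a + 1)) := by
    intro n a
    have tP := SimpleFunc.tendsto_eapprox hP a
    have tN := SimpleFunc.tendsto_eapprox hN a
    rcases (hg0 a).eq_or_lt with h1 | h1
    · have z : ∀ n, s n a = - (SimpleFunc.eapprox N n a).toReal := by
        intro n
        have h2 : P a = 0 := by simp [P, ← h1]
        have := leP n a
        rw [h2, nonpos_iff_eq_zero] at this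
        rw [hsv, this]; simp
      constructor
      · simp only [u, ← h1, z]
        have : Real.exp (-(SimpleFunc.eapprox N n a).toReal) ≤ 1 :=
          Real.exp_le_one_iff.2 (by simp)
        linarith
      · have h3 : N a = ⊤ := by simp [N, ← h1]
        rw [h3] at tN
        have h4 : Tendsto (fun n => (SimpleFunc.eapprox N n a).toReal) atTop atTop := by
          rw [tendsto_atTop]
          intro b
          have := tN.eventually (lt_mem_nhds (ENNReal.ofReal_lt_top (r := b)))
          filter_upwards [this] with n hn
          exact (ENNReal.ofReal_le_iff_le_toReal (SimpleFunc.eapprox_lt_top _ _ _).ne).1 hn.le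
        simp only [u, ← h1, z]
        have h5 := (Real.tendsto_exp_neg_atTop_nhds_zero.comp h4)
        have h6 := (h5.sub_const 1).const_sub 0
        simpa using h6
    · have hNa : N a = ENNReal.ofReal (-Real.log (g a)) := by simp [N, h1.ne']
      have hst : Tendsto (fun n => s n a) atTop (nhds (Real.log (g a))) := by
        simp only [hsv]
        rw [hNa] at tN
        have a1 := (ENNReal.tendsto_toReal (ENNReal.ofReal_ne_top)).comp tP
        have a2 := (ENNReal.tendsto_toReal (ENNReal.ofReal_ne_top)).comp tN
        have := a1.sub a2
        have e : Real.log (g a) = (ENNReal.ofReal (Real.log (g a))).toReal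
            - (ENNReal.ofReal (-Real.log (g a))).toReal := by
          rcases le_total 0 (Real.log (g a)) with h | h
          · rw [ENNReal.toReal_ofReal h, ENNReal.ofReal_of_nonpos (by linarith)]; simp
          · rw [ENNReal.ofReal_of_nonpos h, ENNReal.toReal_ofReal (by linarith)]; simp
        rw [e]; exact this
      constructor
      ·
        have conc : ∀ x y : ℝ, (0 ≤ x ∧ x ≤ Real.log y ∨ x ≤ 0 ∧ Real.log y ≤ x) → 0 < y →
            0 ≤ y * x - (Real.exp x - 1) := by
          intro x y hxy hy
          have b1 := Real.add_one_le_exp (-x)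
          have b2 : Real.exp x * Real.exp (-x) = 1 := by rw [← Real.exp_add]; simp
          have b3 := Real.exp_pos x
          have b4 : Real.exp x - 1 ≤ x * Real.exp x := by nlinarith
          rcases hxy with ⟨c1, c2⟩ | ⟨c1, c2⟩
          · have : Real.exp x ≤ y := by rw [← Real.exp_log hy]; exact Real.exp_le_exp.2 c2
            nlinarith
          · have : y ≤ Real.exp x := by
              conv_lhs => rw [← Real.exp_log hy]
              exact Real.exp_le_exp.2 c2
            nlinarith
        apply conc _ _ _ h1
        rcases le_total 0 (Real.log (g a)) with h | h
        · left
          have : SimpleFunc.eapprox N n a = 0 := by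
            have := leN n a
            rwa [hNa, ENNReal.ofReal_of_nonpos (by linarith), nonpos_iff_eq_zero] at this
          rw [hsv, this]
          refine ⟨by simp, ?_⟩
          simp only [ENNReal.toReal_zero, sub_zero]
          exact ENNReal.toReal_le_of_le_ofReal h (leP n a)
        · right
          have : SimpleFunc.eapprox P n a = 0 := by
            have := leP n a
            rwa [show P a = 0 from ENNReal.ofReal_of_nonpos h, nonpos_iff_eq_zero] at this
          rw [hsv, this]
          refine ⟨by simp, ?_⟩
          have := ENNReal.toReal_le_of_le_ofReal (by linarith) (hNa ▸ leN n a)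
          simp only [ENNReal.toReal_zero]; linarith
      · have h7 := (hst.const_mul (g a)).sub (((Real.continuous_exp.tendsto _).comp hst).sub_const 1)
        have e : g a * Real.log (g a) - g a + 1
            = g a * Real.log (g a) - (Real.exp (Real.log (g a)) - 1) := by
          rw [Real.exp_log h1]; ring
        rw [e]; exact h7
  have hum : ∀ n, Measurable (u n) := fun n => by
    have := (s n).measurable
    fun_prop
  have hlim : ∀ a, ENNReal.ofReal (g a * Real.log (g a) - g a + 1) =
      liminf (fun n => ENNReal.ofReal (u n a)) atTop := fun a =>
    (((ENNReal.continuous_ofReal.tendsto _).comp (hu 0 a).2).liminf_eq).symm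
  calc ∫⁻ a, ENNReal.ofReal (g a * Real.log (g a) - g a + 1) ∂ν
      = ∫⁻ a, liminf (fun n => ENNReal.ofReal (u n a)) atTop ∂ν := lintegral_congr hlim
    _ ≤ liminf (fun n => ∫⁻ a, ENNReal.ofReal (u n a) ∂ν) atTop :=
        lintegral_liminf_le fun n => (hum n).ennreal_ofReal
    _ ≤ liminf (fun n : ℕ => ENNReal.ofReal h) atTop := by
        refine liminf_le_liminf (Eventually.of_forall fun n => ?_)
        have hi1 : Integrable (s n) μ := (s n).integrable_of_isFiniteMeasure
        have hi2 : Integrable (fun a => g a * s n a) ν := by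
          have := (integrable_rnDeriv_smul_iff (f := s n) hac).2 hi1
          simpa using this
        have hi3 : Integrable (fun a => Real.exp (s n a) - 1) ν := by
          have := ((s n).map (fun x => Real.exp x - 1)).integrable_of_isFiniteMeasure (μ := ν)
          exact this
        have e1 : ∫ a, s n a ∂μ = ∫ a, g a * s n a ∂ν := by
          rw [← integral_rnDeriv_smul hac]; simp [g]
        have hh := H (s n)
        rw [e1, ← integral_sub hi2 hi3] at hh
        have hi4 : Integrable (u n) ν := hi2.sub hi3
        rw [← ofReal_integral_eq_lintegral_ofReal hi4 (ae_of_all _ fun a => (hu n a).1)]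
        exact ENNReal.ofReal_le_ofReal hh
    _ = ENNReal.ofReal h := by simp

lemma entropy_compact {α : Type*} [MeasurableSpace α] {ν : Measure α}
    [IsProbabilityMeasure ν] (a : ℝ) (μ : ℕ → Measure α) (hμ : ∀ m, IsProbabilityMeasure (μ m))
    (H : ∀ m : ℕ, relEntropy (μ m) ν ≤ ((a + 1 / ((m : ℝ) + 1) : ℝ) : EReal)) :
    ∃ ρ : Measure α, IsProbabilityMeasure ρ ∧ relEntropy ρ ν ≤ (a : EReal) ∧
      ∃ U : Ultrafilter ℕ, (U : Filter ℕ) ≤ atTop ∧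
        ∀ E, MeasurableSet E → Tendsto (fun m => (μ m).real E) U (nhds (ρ.real E)) := by
  let U : Ultrafilter ℕ := hyperfilter ℕ
  have hU : (U : Filter ℕ) ≤ atTop := by
    rw [← Nat.cofinite_eq_atTop]; exact hyperfilter_le_cofinite
  let L : Set α → ℝ≥0∞ := fun E => (U.map fun m => μ m E).lim
  have hL : ∀ E, Tendsto (fun m => μ m E) U (nhds (L E)) := fun E =>
    (U.map fun m => μ m E).le_nhds_lim
  have Hb : ∀ m : ℕ, relEntropy (μ m) ν ≤ ((a + 1 : ℝ) : EReal) := fun m => by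
    refine (H m).trans ?_
    rw [EReal.coe_le_coe_iff]
    have : (1:ℝ) / ((m:ℝ) + 1) ≤ 1 := by
      rw [div_le_one (by positivity)]; linarith [(Nat.cast_nonneg m : (0:ℝ) ≤ m)]
    linarith
  have hLb : ∀ E, MeasurableSet E → ∀ l : ℝ, 0 < l →
      L E ≤ ENNReal.ofReal ((a + 1) / l + (Real.exp l / l) * ν.real E) := by
    intro E hE l hl
    refine le_of_tendsto (hL E) (Eventually.of_forall fun m => ?_)
    rw [← ENNReal.ofReal_toReal (measure_ne_top (μ m) E)]
    exact ENNReal.ofReal_le_ofReal (relEntropy_set (Hb m) E hE l hl)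
  have hL0 : ∀ E, MeasurableSet E → ν E = 0 → L E = 0 := by
    intro E hE h0
    have t : Tendsto (fun l : ℝ => ENNReal.ofReal ((a + 1) / l)) atTop (nhds 0) := by
      have := (tendsto_const_nhds (x := a + 1)).div_atTop (tendsto_id (α := ℝ) (x := atTop))
      simpa [Function.comp_def] using (ENNReal.continuous_ofReal.tendsto _).comp this
    refine le_antisymm (ge_of_tendsto t ?_) (zero_le)
    filter_upwards [eventually_gt_atTop 0] with l hl
    simpa [measureReal_def, h0] using hLb E hE l hl
  have hLt : ∀ R : ℕ → Set α, (∀ n, MeasurableSet (R n)) →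
      Tendsto (fun n => ν (R n)) atTop (nhds 0) → Tendsto (fun n => L (R n)) atTop (nhds 0) := by
    intro R hR ht
    have ht' : Tendsto (fun n => ν.real (R n)) atTop (nhds 0) := by
      simpa [Function.comp_def, measureReal_def] using
        (ENNReal.tendsto_toReal ENNReal.zero_ne_top).comp ht
    rw [ENNReal.tendsto_nhds_zero]
    intro ε hε
    by_cases hεt : ε = ⊤
    · simp [hεt]
    have hε' : 0 < ε.toReal := ENNReal.toReal_pos hε.ne' hεt
    have t1 : Tendsto (fun l : ℝ => (a + 1) / l) atTop (nhds 0) :=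
      tendsto_const_nhds.div_atTop tendsto_id
    obtain ⟨l, hl1, hl0⟩ := ((t1.eventually (gt_mem_nhds (half_pos hε'))).and
      (eventually_gt_atTop 0)).exists
    have t2 := (ht'.const_mul (Real.exp l / l)).const_add ((a+1)/l)
    simp only [mul_zero, add_zero] at t2
    have : (a+1)/l < ε.toReal := by linarith
    filter_upwards [t2.eventually (gt_mem_nhds this)] with n hn
    refine (hLb _ (hR n) l hl0).trans ?_
    exact ENNReal.ofReal_le_of_le_toReal hn.le
  let ρ : Measure α := Measure.ofMeasurable (fun E _ => L E)
    (by exact hL0 _ MeasurableSet.empty (by simp)) (by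
      intro f hf hd
      let R : ℕ → Set α := fun N => ⋃ i, f (i + N)
      have hR : ∀ N, MeasurableSet (R N) := fun N => MeasurableSet.iUnion fun i => hf _
      have hdN : ∀ N, Pairwise (Function.onFun Disjoint fun i => f (i + N)) := fun N i j hij =>
        hd (by simpa using hij)
      have hνR : Tendsto (fun N => ν (R N)) atTop (nhds 0) := by
        have : ∀ N, ν (R N) = ∑' i, ν (f (i + N)) := fun N =>
          measure_iUnion (hdN N) fun i => hf _
        simp only [this]
        apply ENNReal.tendsto_sum_nat_add (fun i => ν (f i))
        rw [← measure_iUnion hd hf]; exact measure_ne_top _ _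
      have split : ∀ N, L (⋃ i, f i) = ∑ i ∈ Finset.range N, L (f i) + L (R N) := by
        intro N
        have e : ∀ m, μ m (⋃ i, f i) = ∑ i ∈ Finset.range N, μ m (f i) + μ m (R N) := by
          intro m
          rw [measure_iUnion hd hf, measure_iUnion (hdN N) fun i => hf _]
          exact (ENNReal.summable.sum_add_tsum_nat_add' ).symm
        have t1 := hL (⋃ i, f i)
        have t2 := (tendsto_finsetSum (Finset.range N) fun i _ => hL (f i)).add (hL (R N))
        simp only [e] at t1
        exact tendsto_nhds_unique t1 t2
      have t3 := (ENNReal.tendsto_nat_tsum (fun i => L (f i))).add (hLt R hR hνR)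
      simp only [← split, add_zero] at t3
      exact tendsto_nhds_unique tendsto_const_nhds t3)
  have hρ : ∀ E, MeasurableSet E → ρ E = L E := fun E hE => Measure.ofMeasurable_apply E hE
  have hp : IsProbabilityMeasure ρ := ⟨by
    rw [hρ _ MeasurableSet.univ]
    have := hL Set.univ
    simp only [measure_univ] at this
    exact tendsto_nhds_unique this tendsto_const_nhds⟩
  have hconv : ∀ E, MeasurableSet E → Tendsto (fun m => (μ m).real E) U (nhds (ρ.real E)) := by
    intro E hE
    have h1 := hL E
    rw [← hρ E hE] at h1
    exact (ENNReal.tendsto_toReal (measure_ne_top _ _)).comp h1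
  refine ⟨ρ, hp, ?_, U, hU, hconv⟩
  have hac : ρ ≪ ν := Measure.AbsolutelyContinuous.mk fun E hE h0 => by
    rw [hρ E hE]; exact hL0 E hE h0
  refine relEntropy_le_of_fy hac fun s => ?_
  have e : ∀ (m : Measure α) [IsProbabilityMeasure m], ∫ x, s x ∂m
      = ∑ x ∈ s.range, m.real (s ⁻¹' {x}) * x := by
    intro m _
    rw [SimpleFunc.integral_eq_sum _ s.integrable_of_isFiniteMeasure]
    simp [smul_eq_mul]
  have t1 : Tendsto (fun m => ∫ x, s x ∂(μ m) - ∫ x, (Real.exp (s x) - 1) ∂ν) U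
      (nhds (∫ x, s x ∂ρ - ∫ x, (Real.exp (s x) - 1) ∂ν)) := by
    refine Tendsto.sub_const ?_ _
    rw [e ρ]
    simp only [fun m => e (μ m)]
    exact tendsto_finsetSum _ fun x _ => (hconv _ (s.measurableSet_fiber x)).mul_const x
  have t2 : Tendsto (fun m : ℕ => a + 1 / ((m:ℝ) + 1)) U (nhds a) := by
    have := (tendsto_one_div_add_atTop_nhds_zero_nat (𝕜 := ℝ)).const_add a
    rw [add_zero] at this
    exact this.mono_left hU
  refine le_of_tendsto_of_tendsto t1 t2 (Eventually.of_forall fun m => ?_)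
  obtain ⟨C, hC⟩ := s.exists_forall_norm_le
  exact relEntropy_fy (H m) s s.measurable C hC

/-- divisibility type by the first `k` primes -/
noncomputable def tyN (k : ℕ) (x : ℕ) : Fin k → Bool :=
  fun j => decide (Nat.nth Nat.Prime j ∣ x)

/-- first `k` digits -/
noncomputable def tyR (k : ℕ) (a : ℝ) : Fin k → Bool := fun j => decide (digit j a = 1)

/-- truncated kernel -/
noncomputable def kerK (k d : ℕ) (s : Fin d → Fin k → Bool) : ℝ :=
  if ∃ j, ∀ t, s t j = true then 0 else 1

/-- truncated functional -/
noncomputable def FK (k d : ℕ) (m : (Fin k → Bool) → ℝ) : ℝ :=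
  ∑ s : Fin d → Fin k → Bool, kerK k d s * ∏ t, m (s t)

/-- empirical weights -/
noncomputable def empW {T : Type*} [DecidableEq T] {n : ℕ} (τ : Fin n → T) (t : T) : ℝ :=
  ((Finset.univ.filter fun i => τ i = t).card : ℝ) / n

/-- limiting weights -/
noncomputable def vW (k : ℕ) (t : Fin k → Bool) : ℝ :=
  ∏ j : Fin k, if t j then ((Nat.nth Nat.Prime j : ℕ) : ℝ)⁻¹ else 1 - ((Nat.nth Nat.Prime j : ℕ) : ℝ)⁻¹

lemma FK_continuous (k d : ℕ) : Continuous (FK k d) := by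
  unfold FK; fun_prop

lemma kerK_mem (k d : ℕ) (s) : 0 ≤ kerK k d s ∧ kerK k d s ≤ 1 := by
  unfold kerK; split_ifs <;> norm_num

lemma nth_prime_ge (j : ℕ) : j + 2 ≤ Nat.nth Nat.Prime j := by
  induction j with
  | zero => simp [Nat.nth_prime_zero_eq_two]
  | succ j ih =>
    have : Nat.nth Nat.Prime j < Nat.nth Nat.Prime (j + 1) :=
      Nat.nth_strictMono Nat.infinite_setOfPred_prime (Nat.lt_succ_self j)
    omega

lemma vW_pos (k : ℕ) (t) : 0 < vW k t := by
  unfold vW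
  apply Finset.prod_pos
  intro j _
  have h := nth_prime_ge j
  have h2 : (2:ℝ) ≤ ((Nat.nth Nat.Prime j : ℕ) : ℝ) := by
    exact_mod_cast (by omega : 2 ≤ Nat.nth Nat.Prime j)
  split_ifs
  · positivity
  · have : ((Nat.nth Nat.Prime j : ℕ) : ℝ)⁻¹ < 1 := inv_lt_one_of_one_lt₀ (by linarith)
    linarith

lemma emp_FK {n : ℕ} (k d : ℕ) (τ : Fin n → Fin k → Bool) :
    (1 / (n : ℝ) ^ d) * ∑ i : Fin d → Fin n, kerK k d (fun t => τ (i t)) = FK k d (empW τ) := by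
  have h1 : ∑ i : Fin d → Fin n, kerK k d (fun t => τ (i t)) =
      ∑ s : Fin d → Fin k → Bool, kerK k d s *
        ∏ t, ((Finset.univ.filter fun i => τ i = s t).card : ℝ) := by
    rw [← Finset.sum_fiberwise (s := Finset.univ) (g := fun (i : Fin d → Fin n) t => τ (i t))]
    apply Finset.sum_congr rfl
    intro s _
    rw [Finset.sum_congr rfl (g := fun _ => kerK k d s)]
    · rw [Finset.sum_const, nsmul_eq_mul, mul_comm]
      congr 1
      rw [← Nat.cast_prod, ← Fintype.card_piFinset]
      congr 2
      ext i
      simp [Fintype.mem_piFinset, funext_iff]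
    · intro i hi
      rw [Finset.mem_filter] at hi
      rw [← hi.2]
  rw [h1, FK, Finset.mul_sum]
  apply Finset.sum_congr rfl
  intro s _
  simp only [empW, Finset.prod_div_distrib, Finset.prod_const, Finset.card_univ, Fintype.card_fin]
  ring

lemma measurable_digit (i : ℕ) : Measurable (digit i) := by
  unfold digit
  have h1 : Measurable fun a : ℝ => ⌊a * 2 ^ (i + 1)⌋ := Int.measurable_floor.comp (by fun_prop)
  exact (measurable_from_top (f := fun z : ℤ => z.toNat % 2)).comp h1

lemma measurable_tyR (k : ℕ) : Measurable (tyR k) := by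
  apply measurable_pi_lambda
  intro j
  exact (measurable_from_top (f := fun z : ℕ => decide (z = 1))).comp (measurable_digit j)

lemma digit_zero_or (i : ℕ) (a : ℝ) : digit i a = 0 ∨ digit i a = 1 := by
  unfold digit; omega

/-- the hypothesis on `ν`, repackaged -/
lemma nu_cyl (ν : Measure ℝ)
    (hν : ∀ (k : ℕ) (b : ℕ → Fin 2),
      ν {a | ∀ j < k, digit j a = (b j : ℕ)} =
        ∏ j ∈ Finset.range k,
          (if b j = 1 then ((Nat.nth Nat.Prime j : ℝ≥0∞))⁻¹
            else 1 - ((Nat.nth Nat.Prime j : ℝ≥0∞))⁻¹)) (k : ℕ) (t : Fin k → Bool) :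
    ν.real (tyR k ⁻¹' {t}) = vW k t := by
  let b : ℕ → Fin 2 := fun j => if h : j < k then (if t ⟨j, h⟩ then 1 else 0) else 0
  have hb : ∀ j : Fin k, b j = if t j then 1 else 0 := fun j => by simp [b]
  have h1 : tyR k ⁻¹' {t} = {a | ∀ j < k, digit j a = (b j : ℕ)} := by
    ext a
    simp only [Set.mem_preimage, Set.mem_singleton_iff, Set.mem_ofPred_eq, funext_iff, tyR]
    constructor
    · intro h j hj
      have h2 := h ⟨j, hj⟩
      have h3 := hb ⟨j, hj⟩
      simp only at h2 h3
      rw [h3, ← h2]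
      rcases digit_zero_or j a with h | h <;> simp [h]
    · intro h j
      have h2 := h j j.2
      rw [hb] at h2
      rw [h2]
      cases t j <;> simp
  rw [measureReal_def, h1, hν, ENNReal.toReal_prod, vW, Finset.prod_range]
  apply Finset.prod_congr rfl
  intro j _
  rw [hb]
  cases h : t j
  · simp only [Bool.false_eq_true, ↓reduceIte]
    rw [if_neg (by decide), ENNReal.toReal_sub_of_le _ (by simp)]
    · simp
    · rw [ENNReal.inv_le_one]; exact_mod_cast (by have := nth_prime_ge j; omega)
  · simp

lemma sum_marg (k : ℕ) (μ : Measure ℝ) [IsProbabilityMeasure μ] :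
    ∑ t, μ.real (tyR k ⁻¹' {t}) = 1 := by
  have := sum_measureReal_preimage_singleton (μ := μ) (f := tyR k) Finset.univ
    (fun y _ => measurable_tyR k (measurableSet_singleton y))
  rw [this]; simp

lemma integral_FK (k d : ℕ) (μ : Measure ℝ) [IsProbabilityMeasure μ] :
    ∫ y, kerK k d (fun t => tyR k (y t)) ∂(Measure.pi fun _ : Fin d => μ) =
      FK k d (fun t => μ.real (tyR k ⁻¹' {t})) := by
  have hm : Measurable (fun (y : Fin d → ℝ) t => tyR k (y t)) :=
    measurable_pi_lambda _ fun t => (measurable_tyR k).comp (measurable_pi_apply t)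
  have := integral_map (μ := Measure.pi fun _ : Fin d => μ) hm.aemeasurable
    (f := kerK k d) (measurable_of_finite _).aestronglyMeasurable
  rw [← this]
  have h3 : IsProbabilityMeasure (Measure.map (fun (y : Fin d → ℝ) t => tyR k (y t))
      (Measure.pi fun _ : Fin d => μ)) := Measure.isProbabilityMeasure_map hm.aemeasurable
  rw [integral_fintype Integrable.of_finite]
  unfold FK
  apply Finset.sum_congr rfl
  intro s _
  rw [smul_eq_mul, mul_comm]
  congr 1
  rw [measureReal_def, Measure.map_apply hm (measurableSet_singleton s)]
  have : (fun (y : Fin d → ℝ) t => tyR k (y t)) ⁻¹' {s}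
      = Set.pi Set.univ fun t => tyR k ⁻¹' {s t} := by
    ext y; simp [funext_iff]
  rw [this, Measure.pi_pi, ENNReal.toReal_prod]
  rfl

/-- the bad set -/
def EK (k : ℕ) : Set (ℝ × ℝ) := {p | ∃ i, k ≤ i ∧ digit i p.1 = 1 ∧ digit i p.2 = 1}

lemma EK_eq (k : ℕ) : EK k = ⋃ i : ℕ, {p : ℝ × ℝ | digit (i + k) p.1 = 1 ∧ digit (i + k) p.2 = 1} := by
  ext p
  simp only [EK, Set.mem_ofPred_eq, Set.mem_iUnion]
  constructor
  · rintro ⟨i, hi, h⟩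
    exact ⟨i - k, by rwa [Nat.sub_add_cancel hi]⟩
  · rintro ⟨i, h⟩
    exact ⟨i + k, by omega, h⟩

lemma measurableSet_digit (i : ℕ) : MeasurableSet {a | digit i a = 1} :=
  measurable_digit i (measurableSet_singleton 1)

lemma measurableSet_EK (k : ℕ) : MeasurableSet (EK k) := by
  rw [EK_eq]
  exact MeasurableSet.iUnion fun i =>
    ((measurableSet_digit (i + k)).preimage measurable_fst).inter
      ((measurableSet_digit (i + k)).preimage measurable_snd)

lemma measurable_kernel (d : ℕ) : Measurable (coprimeKernelD d) := by
  unfold coprimeKernelD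
  refine measurable_const.indicator ?_
  have : {y : Fin d → ℝ | ∀ i : ℕ, ¬(∀ t : Fin d, digit i (y t) = 1)}
      = ⋂ i : ℕ, (⋂ t : Fin d, {y : Fin d → ℝ | digit i (y t) = 1})ᶜ := by
    ext y; simp
  rw [this]
  exact MeasurableSet.iInter fun i => (MeasurableSet.iInter fun t =>
    (measurableSet_digit i).preimage (measurable_pi_apply t)).compl

lemma F_FK (k e : ℕ) (μ : Measure ℝ) [IsProbabilityMeasure μ] :
    |∫ y, coprimeKernelD (e + 2) y ∂(Measure.pi fun _ : Fin (e + 2) => μ) -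
      FK k (e + 2) (fun t => μ.real (tyR k ⁻¹' {t}))| ≤ (μ.prod μ).real (EK k) := by
  rw [← integral_FK]
  have hm : Measurable (fun (y : Fin (e + 2) → ℝ) t => tyR k (y t)) :=
    measurable_pi_lambda _ fun t => (measurable_tyR k).comp (measurable_pi_apply t)
  have hk : Measurable fun y : Fin (e + 2) → ℝ => kerK k (e + 2) (fun t => tyR k (y t)) :=
    (measurable_of_finite (kerK k (e + 2))).comp hm
  have hi1 : Integrable (coprimeKernelD (e + 2)) (Measure.pi fun _ : Fin (e + 2) => μ) := by
    refine Integrable.of_bound (measurable_kernel _).aestronglyMeasurable 1 (ae_of_all _ fun y => ?_)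
    unfold coprimeKernelD
    refine (norm_indicator_le_norm_self _ _).trans (by simp)
  have hi2 : Integrable (fun y : Fin (e + 2) → ℝ => kerK k (e + 2) (fun t => tyR k (y t)))
      (Measure.pi fun _ : Fin (e + 2) => μ) := by
    refine Integrable.of_bound hk.aestronglyMeasurable 1 (ae_of_all _ fun y => ?_)
    rw [Real.norm_eq_abs, abs_le]
    have := kerK_mem k (e + 2) (fun t => tyR k (y t))
    constructor <;> linarith
  rw [← integral_sub hi1 hi2]
  refine (abs_integral_le_integral_abs).trans ?_
  let q : (Fin (e + 2) → ℝ) → ℝ × ℝ := fun y => (y 0, y 1)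
  have hq : Measurable q := by fun_prop
  have hmap : Measure.map q (Measure.pi fun _ : Fin (e + 2) => μ) = μ.prod μ := by
    have h1 : iIndepFun (fun (i : Fin (e + 2)) (y : Fin (e + 2) → ℝ) => y i)
        (Measure.pi fun _ : Fin (e + 2) => μ) :=
      iIndepFun_pi (X := fun _ x => x) (fun i => aemeasurable_id)
    have h2 := h1.indepFun (i := 0) (j := 1) (by simp)
    rw [indepFun_iff_map_prod_eq_prod_map_map (measurable_pi_apply _).aemeasurable
      (measurable_pi_apply _).aemeasurable] at h2
    have h3 : ∀ i : Fin (e + 2), Measure.map (fun y : Fin (e + 2) → ℝ => y i)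
        (Measure.pi fun _ : Fin (e + 2) => μ) = μ := fun i =>
      (measurePreserving_eval (fun _ : Fin (e + 2) => μ) i).map_eq
    rw [h3, h3] at h2
    exact h2
  have hE := measurableSet_EK k
  calc _ ≤ ∫ y, (q ⁻¹' EK k).indicator (fun _ => (1:ℝ)) y ∂(Measure.pi fun _ : Fin (e + 2) => μ) := by
        refine integral_mono (hi1.sub hi2).abs ((integrable_const 1).indicator (hq hE)) fun y => ?_
        by_cases hy : y ∈ q ⁻¹' EK k
        · simp only [Set.indicator_of_mem hy]
          have h1 := kerK_mem k (e + 2) (fun t => tyR k (y t))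
          have h2 : 0 ≤ coprimeKernelD (e + 2) y ∧ coprimeKernelD (e + 2) y ≤ 1 := by
            unfold coprimeKernelD Set.indicator; split_ifs <;> norm_num
          rw [abs_le]; constructor <;> linarith
        · simp only [Set.indicator_of_notMem hy]
          have : coprimeKernelD (e + 2) y = kerK k (e + 2) (fun t => tyR k (y t)) := by
            unfold coprimeKernelD kerK
            by_cases hc : ∃ j : Fin k, ∀ t, tyR k (y t) j = true
            · rw [if_pos hc, Set.indicator_of_notMem]
              obtain ⟨j, hj⟩ := hc
              intro hy'
              exact hy' j fun t => by simpa [tyR] using hj t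
            · rw [if_neg hc, Set.indicator_of_mem]
              intro i hi
              by_cases hik : i < k
              · exact hc ⟨⟨i, hik⟩, fun t => by simpa [tyR] using hi t⟩
              · exact hy ⟨i, by omega, hi 0, hi 1⟩
          rw [this]; simp
    _ = (μ.prod μ).real (EK k) := by
        rw [integral_indicator (hq hE), ← hmap]
        simp [measureReal_def, Measure.map_apply hq hE]

lemma nu_digit (ν : Measure ℝ) [IsProbabilityMeasure ν]
    (hν : ∀ (k : ℕ) (t : Fin k → Bool), ν.real (tyR k ⁻¹' {t}) = vW k t) (i : ℕ) :
    ν.real {a | digit i a = 1} = ((Nat.nth Nat.Prime i : ℕ) : ℝ)⁻¹ := by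
  have h1 : {a | digit i a = 1} = ⋃ t : Fin i → Bool, tyR (i + 1) ⁻¹' {Fin.snoc (α := fun _ => Bool) t true} := by
    ext a
    simp only [Set.mem_ofPred_eq, Set.mem_iUnion, Set.mem_preimage, Set.mem_singleton_iff]
    constructor
    · intro h
      refine ⟨tyR i a, ?_⟩
      ext j
      refine Fin.lastCases ?_ (fun j => ?_) j
      · simp [tyR, h]
      · simp [tyR]
    · rintro ⟨t, ht⟩
      have := congrFun ht (Fin.last i)
      simpa [tyR] using this
  rw [h1, measureReal_iUnion_fintype]
  · simp only [hν]
    have : ∀ t : Fin i → Bool, vW (i + 1) (Fin.snoc (α := fun _ => Bool) t true)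
        = vW i t * ((Nat.nth Nat.Prime i : ℕ) : ℝ)⁻¹ := by
      intro t
      simp [vW, Fin.prod_univ_castSucc]
    simp only [this, ← Finset.sum_mul]
    rw [← Finset.sum_congr rfl fun t _ => hν i t, sum_marg, one_mul]
  · intro t t' htt
    refine Set.disjoint_left.2 fun a h1 h2 => htt ?_
    have h3 : Fin.snoc (α := fun _ => Bool) t true = Fin.snoc (α := fun _ => Bool) t' true :=
      (Set.mem_singleton_iff.1 h1).symm.trans h2
    exact (Fin.snoc_injective2 h3).1
  · intro t
    exact measurable_tyR _ (measurableSet_singleton _)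

lemma nu_EK (ν : Measure ℝ) [IsProbabilityMeasure ν]
    (hν : ∀ (k : ℕ) (t : Fin k → Bool), ν.real (tyR k ⁻¹' {t}) = vW k t) :
    Tendsto (fun k => (ν.prod ν).real (EK k)) atTop (nhds 0) := by
  let f : ℕ → ℝ≥0∞ := fun i => ENNReal.ofReal (1 / ((i:ℝ) + 1) ^ 2)
  have hf : ∑' i, f i ≠ ⊤ := by
    have h1 : Summable fun i : ℕ => 1 / ((i:ℝ) + 1) ^ 2 := by
      have := (summable_nat_add_iff 1).2 (Real.summable_one_div_nat_pow.2 (by norm_num : 1 < 2))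
      simpa using this
    exact h1.tsum_ofReal_ne_top
  have ht := ENNReal.tendsto_sum_nat_add f hf
  have hb : ∀ k, (ν.prod ν) (EK k) ≤ ∑' i, f (i + k) := by
    intro k
    rw [EK_eq]
    refine (measure_iUnion_le _).trans (ENNReal.tsum_le_tsum fun i => ?_)
    have : {p : ℝ × ℝ | digit (i + k) p.1 = 1 ∧ digit (i + k) p.2 = 1}
        = {a | digit (i + k) a = 1} ×ˢ {a | digit (i + k) a = 1} := by
      ext p; simp
    rw [this, Measure.prod_prod]
    have h2 : ν {a | digit (i + k) a = 1} = ENNReal.ofReal (((Nat.nth Nat.Prime (i + k) : ℕ) : ℝ)⁻¹) := by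
      rw [← nu_digit ν hν, measureReal_def, ENNReal.ofReal_toReal (measure_ne_top _ _)]
    rw [h2, ← ENNReal.ofReal_mul (by positivity)]
    apply ENNReal.ofReal_le_ofReal
    rw [← mul_inv, ← sq, one_div]
    have h3 : ((i + k : ℕ) : ℝ) + 1 ≤ ((Nat.nth Nat.Prime (i + k) : ℕ) : ℝ) := by
      exact_mod_cast (by have := nth_prime_ge (i + k); omega)
    gcongr
  have h3 : Tendsto (fun k => (ν.prod ν) (EK k)) atTop (nhds 0) :=
    tendsto_of_tendsto_of_tendsto_of_le_of_le tendsto_const_nhds ht (fun _ => zero_le) hb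
  simpa [Function.comp_def, measureReal_def] using
    (ENNReal.tendsto_toReal ENNReal.zero_ne_top).comp h3

/-- uniform approximation on entropy balls -/
lemma F_FK_unif (e : ℕ) (ν : Measure ℝ) [IsProbabilityMeasure ν]
    (hν : ∀ (k : ℕ) (t : Fin k → Bool), ν.real (tyR k ⁻¹' {t}) = vW k t) (h δ : ℝ) (hδ : 0 < δ) :
    ∃ K, ∀ k ≥ K, ∀ μ : Measure ℝ, IsProbabilityMeasure μ → relEntropy μ ν ≤ (h : EReal) →
      |∫ y, coprimeKernelD (e + 2) y ∂(Measure.pi fun _ : Fin (e + 2) => μ) -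
        FK k (e + 2) (fun t => μ.real (tyR k ⁻¹' {t}))| ≤ δ := by
  have t1 : Tendsto (fun l : ℝ => h / l) atTop (nhds 0) := tendsto_const_nhds.div_atTop tendsto_id
  obtain ⟨l, hl1, hl0⟩ := ((t1.eventually (gt_mem_nhds (half_pos hδ))).and
      (eventually_gt_atTop 0)).exists
  have t2 := (t1.const_mul (Real.exp l / l)).const_add (h / l)
  simp only [mul_zero, add_zero] at t2
  obtain ⟨l', hl1', hl0'⟩ := ((t2.eventually (gt_mem_nhds (by linarith : h / l < δ))).and
      (eventually_gt_atTop 0)).exists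
  have t3 := ((((nu_EK ν hν).const_mul (Real.exp l' / l')).const_add (h / l')).const_mul
    (Real.exp l / l)).const_add (h / l)
  simp only [mul_zero, add_zero] at t3
  obtain ⟨K, hK⟩ := eventually_atTop.1 (t3.eventually (gt_mem_nhds hl1'))
  refine ⟨K, fun k hk μ hμ H => (F_FK k e μ).trans ?_⟩
  exact (relEntropy_prod H _ (measurableSet_EK k) l hl0 l' hl0').trans (hK k hk).le

lemma unif_real (n : ℕ) (B : Set ℕ) [DecidablePred (· ∈ B)] :
    (uniformOn (Set.Icc 1 n)).real B = (((Finset.Icc 1 n).filter (· ∈ B)).card : ℝ) / n := by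
  rw [measureReal_def, uniformOn, cond_apply (Set.finite_Icc 1 n).measurableSet]
  have h1 : Set.Icc 1 n ∩ B = ((Finset.Icc 1 n).filter (· ∈ B) : Finset ℕ) := by
    ext x; simp
  have h2 : (Set.Icc 1 n : Set ℕ) = (Finset.Icc 1 n : Finset ℕ) := by simp
  rw [h1, h2, Measure.count_apply_finset, Measure.count_apply_finset]
  simp [div_eq_inv_mul]

lemma div_dens (m : ℕ) (hm : 0 < m) :
    Tendsto (fun n : ℕ => ((n / m : ℕ) : ℝ) / n) atTop (nhds (m : ℝ)⁻¹) := by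
  have h := (tendsto_nat_floor_mul_div_atTop (R := ℝ) (a := (m:ℝ)⁻¹) (by positivity)).comp
    tendsto_natCast_atTop_atTop
  refine h.congr fun n => ?_
  simp only [Function.comp]
  congr 2
  rw [mul_comm, ← div_eq_mul_inv, Nat.floor_div_eq_div]

lemma dens (k : ℕ) (b : ℕ → Bool) : ∀ m : ℕ, 0 < m →
    (∀ j < k, Nat.Coprime m (Nat.nth Nat.Prime j)) →
    Tendsto (fun n : ℕ => (((Finset.Icc 1 n).filter
      (fun x => m ∣ x ∧ ∀ j < k, (Nat.nth Nat.Prime j ∣ x ↔ b j = true))).card : ℝ) / n) atTop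
      (nhds ((m : ℝ)⁻¹ * ∏ j ∈ Finset.range k, if b j then ((Nat.nth Nat.Prime j : ℕ) : ℝ)⁻¹
        else 1 - ((Nat.nth Nat.Prime j : ℕ) : ℝ)⁻¹)) := by
  induction k with
  | zero =>
    intro m hm _
    have h := div_dens m hm
    simp only [Finset.range_zero, Finset.prod_empty, mul_one]
    refine h.congr fun n => ?_
    congr 2
    rw [← Nat.Ioc_filter_dvd_card_eq_div]
    congr 1
    ext x; simp; omega
  | succ k ih =>
    intro m hm hc
    set p := Nat.nth Nat.Prime k with hp
    have hpp : Nat.Prime p := Nat.prime_nth_prime k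
    have hcop : ∀ j < k, Nat.Coprime p (Nat.nth Nat.Prime j) := by
      intro j hj
      rw [Nat.coprime_primes hpp (Nat.prime_nth_prime j)]
      exact (Nat.nth_strictMono Nat.infinite_setOfPred_prime hj).ne'
    have ih1 := ih m hm fun j hj => hc j (by omega)
    have ih2 := ih (m * p) (Nat.mul_pos hm hpp.pos) fun j hj =>
      Nat.Coprime.mul_left (hc j (by omega)) (hcop j hj)
    have hdvd : ∀ x, m * p ∣ x ↔ m ∣ x ∧ p ∣ x := fun x =>
      ⟨fun h => ⟨dvd_of_mul_right_dvd h, dvd_of_mul_left_dvd h⟩,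
        fun h => (hc k (by omega)).mul_dvd_of_dvd_of_dvd h.1 h.2⟩
    have hlt : ∀ P : ℕ → Prop, (∀ j < k + 1, P j) ↔ (∀ j < k, P j) ∧ P k := fun P => by
      simp only [Nat.lt_succ_iff_lt_or_eq]
      constructor
      · intro h; exact ⟨fun j hj => h j (Or.inl hj), h k (Or.inr rfl)⟩
      · rintro ⟨h1, h2⟩ j (hj | rfl)
        · exact h1 j hj
        · exact h2
    rw [Finset.prod_range_succ, ← hp]
    cases hb : b k
    · have := ih1.sub ih2
      refine (this.congr fun n => ?_).trans (by
        apply le_of_eq; congr 1; push_cast; simp; ring)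
      rw [← sub_div]
      congr 1
      rw [sub_eq_iff_eq_add, ← Nat.cast_add, ← Finset.card_union_of_disjoint]
      · congr 2
        ext x
        simp only [Finset.mem_filter, Finset.mem_union, hlt, hb, hdvd, ← hp]
        by_cases h : p ∣ x <;> simp [h]
      · rw [Finset.disjoint_left]
        intro x h1 h2
        simp only [Finset.mem_filter, hlt, hb, hdvd, ← hp] at h1 h2
        have := h1.2.2.2.1 h2.2.1.2
        simp at this
    · refine (ih2.congr fun n => ?_).trans (by
        apply le_of_eq; congr 1; push_cast; simp; ring)
      congr 3
      ext x
      simp only [hlt, hb, hdvd, ← hp]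
      by_cases h : p ∣ x <;> simp [h]

/-- law of the type of a uniform variable -/
noncomputable def uW (k n : ℕ) (t : Fin k → Bool) : ℝ :=
  (uniformOn (Set.Icc 1 n)).real (tyN k ⁻¹' {t})

lemma uW_tendsto (k : ℕ) (t : Fin k → Bool) :
    Tendsto (fun n => uW k n t) atTop (nhds (vW k t)) := by
  classical
  let b : ℕ → Bool := fun j => if h : j < k then t ⟨j, h⟩ else false
  have hb : ∀ j : Fin k, b j = t j := fun j => by simp [b]
  have h := dens k b 1 one_pos (fun j _ => Nat.coprime_one_left _)
  have e : ((1 : ℕ) : ℝ)⁻¹ * (∏ j ∈ Finset.range k, if b j then ((Nat.nth Nat.Prime j : ℕ) : ℝ)⁻¹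
        else 1 - ((Nat.nth Nat.Prime j : ℕ) : ℝ)⁻¹) = vW k t := by
    rw [Finset.prod_range]
    simp [vW, hb]
  rw [e] at h
  refine h.congr fun n => ?_
  rw [uW, unif_real]
  congr 3
  ext x
  simp only [one_dvd, true_and, Set.mem_preimage, Set.mem_singleton_iff, funext_iff, tyN,
    Finset.mem_filter]
  refine and_congr_right fun _ => ?_
  constructor
  · intro h j
    rw [← hb, ← Bool.coe_iff_coe]; simpa using h j j.2
  · intro h j hj
    have := h ⟨j, hj⟩
    rw [← hb] at this
    simp only at this
    rw [← this]; simp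

lemma unifVec_prob (n : ℕ) (hn : 1 ≤ n) : IsProbabilityMeasure (uniformOn (Set.Icc 1 n)) :=
  isProbabilityMeasure_uniformOn (Set.finite_Icc _ _) ⟨1, by simp [hn]⟩

lemma unifVec_set {n : ℕ} (hn : 1 ≤ n) (k : ℕ) (E : Set (Fin n → Fin k → Bool))
    [DecidablePred (· ∈ E)] :
    (unifVec n).real {ω | (fun i => tyN k (ω i)) ∈ E} =
      ∑ τ : Fin n → Fin k → Bool, if τ ∈ E then ∏ i, uW k n (τ i) else 0 := by
  have := unifVec_prob n hn
  have hm : Measurable (fun (ω : Fin n → ℕ) i => tyN k (ω i)) :=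
    measurable_pi_lambda _ fun i => (measurable_from_top (f := tyN k)).comp (measurable_pi_apply i)
  have hsum := sum_measureReal_preimage_singleton (μ := unifVec n)
    (f := fun (ω : Fin n → ℕ) i => tyN k (ω i)) (Finset.univ.filter (· ∈ E))
    (fun y _ => hm (measurableSet_singleton y))
    (by intro y _; unfold unifVec; exact measure_ne_top _ _)
  have h2 : {ω : Fin n → ℕ | (fun i => tyN k (ω i)) ∈ E} =
      (fun (ω : Fin n → ℕ) i => tyN k (ω i)) ⁻¹' ((Finset.univ.filter (· ∈ E) : Finset _) : Set _) := by
    ext ω; simp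
  rw [h2, ← hsum, Finset.sum_filter]
  apply Finset.sum_congr rfl
  intro τ _
  congr 1
  have h3 : (fun (ω : Fin n → ℕ) i => tyN k (ω i)) ⁻¹' {τ}
      = Set.pi Set.univ fun i => tyN k ⁻¹' {τ i} := by
    ext y; simp [funext_iff]
  rw [h3, measureReal_def, unifVec, Measure.pi_pi, ENNReal.toReal_prod]
  rfl

lemma uW_sum (k n : ℕ) (hn : 1 ≤ n) : ∑ t, uW k n t = 1 := by
  have := unifVec_prob n hn
  have := sum_measureReal_preimage_singleton (μ := uniformOn (Set.Icc 1 n)) (f := tyN k) Finset.univ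
    (fun y _ => trivial)
  unfold uW
  rw [this]; simp

lemma uW_nonneg (k n : ℕ) (t) : 0 ≤ uW k n t := measureReal_nonneg

section finite
variable {T : Type*} [Fintype T] [DecidableEq T]

lemma sum_prod_pow (n : ℕ) (G : Fin n → T → ℝ) :
    ∑ τ : Fin n → T, ∏ i, G i (τ i) = ∏ i, ∑ t, G i t := by
  rw [Finset.prod_univ_sum, Fintype.piFinset_univ]

lemma emp_sum {n : ℕ} (hn : 1 ≤ n) (τ : Fin n → T) (g : T → ℝ) :
    ∑ i, g (τ i) = n * ∑ t, empW τ t * g t := by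
  rw [← Finset.sum_fiberwise (s := Finset.univ) (g := τ), Finset.mul_sum]
  apply Finset.sum_congr rfl
  intro t _
  rw [Finset.sum_congr rfl (g := fun _ => g t)]
  · rw [Finset.sum_const, nsmul_eq_mul, empW]
    have : (n:ℝ) ≠ 0 := by positivity
    field_simp
  · intro i hi
    rw [(Finset.mem_filter.1 hi).2]

lemma emp_total {n : ℕ} (hn : 1 ≤ n) (τ : Fin n → T) : ∑ t, empW τ t = 1 := by
  have h := emp_sum hn τ (fun _ => 1)
  simp only [mul_one, Finset.sum_const, Finset.card_univ, Fintype.card_fin, nsmul_eq_mul] at h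
  have : (n:ℝ) ≠ 0 := by positivity
  field_simp at h
  linarith

lemma emp_nonneg {n : ℕ} (τ : Fin n → T) (t : T) : 0 ≤ empW τ t := by
  unfold empW; positivity

lemma emp_pos {n : ℕ} (τ : Fin n → T) (i : Fin n) : 0 < empW τ (τ i) := by
  unfold empW
  have h1 : 0 < (Finset.univ.filter fun j => τ j = τ i).card :=
    Finset.card_pos.2 ⟨i, by simp⟩
  have h2 : 0 < n := i.pos
  positivity

lemma sum_emp_le {n : ℕ} (hn : 1 ≤ n) :
    ∑ τ : Fin n → T, ∏ i, empW τ (τ i) ≤ ((n : ℝ) + 1) ^ Fintype.card T := by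
  classical
  have hn0 : (n:ℝ) ≠ 0 := by positivity
  calc ∑ τ : Fin n → T, ∏ i, empW τ (τ i)
      ≤ ∑ τ : Fin n → T, ∑ c : T → Fin (n + 1),
          (if ∑ t, ((c t : ℕ) : ℝ) = n then ∏ i, (((c (τ i) : ℕ) : ℝ) / n) else 0) := by
        apply Finset.sum_le_sum
        intro τ _
        let c : T → Fin (n + 1) := fun t => ⟨(Finset.univ.filter fun i => τ i = t).card, by
          have := Finset.card_le_univ (Finset.univ.filter fun i => τ i = t)
          simp only [Fintype.card_fin] at this; omega⟩
        have h1 : ∑ t, ((c t : ℕ) : ℝ) = n := by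
          have := emp_total hn τ
          simp only [empW, ← Finset.sum_div] at this
          rw [div_eq_one_iff_eq hn0] at this
          exact this
        refine le_trans (le_of_eq ?_) (Finset.single_le_sum (f := fun c : T → Fin (n + 1) =>
          (if ∑ t, ((c t : ℕ) : ℝ) = n then ∏ i, (((c (τ i) : ℕ) : ℝ) / n) else 0)) ?_
          (Finset.mem_univ c))
        · simp only [h1, if_true]; rfl
        · intro c _
          split_ifs
          · positivity
          · exact le_rfl
    _ = ∑ c : T → Fin (n + 1), ∑ τ : Fin n → T,
          (if ∑ t, ((c t : ℕ) : ℝ) = n then ∏ i, (((c (τ i) : ℕ) : ℝ) / n) else 0) :=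
        Finset.sum_comm
    _ ≤ ∑ c : T → Fin (n + 1), 1 := by
        apply Finset.sum_le_sum
        intro c _
        split_ifs with h
        · rw [sum_prod_pow n (fun _ t => ((c t : ℕ) : ℝ) / n)]
          simp only [← Finset.sum_div, h, div_self hn0]
          simp
        · simp
    _ = ((n : ℝ) + 1) ^ Fintype.card T := by simp

lemma sanov_upper {n : ℕ} (hn : 1 ≤ n) (u : T → ℝ) (hu : ∀ t, 0 ≤ u t) (E : Set (Fin n → T))
    [DecidablePred (· ∈ E)] (θ : ℝ) (hθ : 0 < θ)
    (h : θ ≤ ∑ τ, if τ ∈ E then ∏ i, u (τ i) else 0) :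
    ∃ τ ∈ E, (∀ i, 0 < u (τ i)) ∧ ∑ t, empW τ t * Real.log (empW τ t / u t) ≤
      (- Real.log θ + Real.log 2 + Fintype.card T * Real.log ((n : ℝ) + 1)) / n := by
  set N : ℝ := ((n : ℝ) + 1) ^ Fintype.card T with hN
  have hNpos : 0 < N := by positivity
  have hn0 : (0:ℝ) < n := by positivity
  have step : ∃ τ ∈ E, (∀ i, 0 < u (τ i)) ∧ θ / (2 * N) ≤ ∏ i, (u (τ i) / empW τ (τ i)) := by
    by_contra hcon
    push Not at hcon
    have : ∑ τ, (if τ ∈ E then ∏ i, u (τ i) else 0) ≤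
        ∑ τ : Fin n → T, θ / (2 * N) * ∏ i, empW τ (τ i) := by
      apply Finset.sum_le_sum
      intro τ _
      have hp : 0 < ∏ i, empW τ (τ i) := Finset.prod_pos fun i _ => emp_pos τ i
      split_ifs with hτ
      · by_cases hpos : ∀ i, 0 < u (τ i)
        · have := hcon τ hτ hpos
          rw [Finset.prod_div_distrib, div_lt_iff₀ hp] at this
          exact this.le
        · push Not at hpos
          obtain ⟨i, hi⟩ := hpos
          rw [Finset.prod_eq_zero (Finset.mem_univ i) (le_antisymm hi (hu _))]
          positivity
      · positivity
    rw [← Finset.mul_sum] at this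
    have h2 := mul_le_mul_of_nonneg_left (sum_emp_le (T := T) hn)
      (by positivity : 0 ≤ θ / (2 * N))
    rw [← hN] at h2
    have h3 : θ / (2 * N) * N = θ / 2 := by field_simp
    linarith
  obtain ⟨τ, hτ, hpos, hR⟩ := step
  refine ⟨τ, hτ, hpos, ?_⟩
  have h1 := Real.log_le_log (by positivity) hR
  rw [Real.log_prod (fun i _ => (div_pos (hpos i) (emp_pos τ i)).ne'),
    Real.log_div hθ.ne' (by positivity), Real.log_mul (by norm_num) hNpos.ne', hN, Real.log_pow,
    emp_sum hn τ (fun t => Real.log (u t / empW τ t))] at h1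
  rw [le_div_iff₀ hn0]
  have h2 : ∑ t, empW τ t * Real.log (u t / empW τ t)
      = - ∑ t, empW τ t * Real.log (empW τ t / u t) := by
    rw [← Finset.sum_neg_distrib]
    apply Finset.sum_congr rfl
    intro t _
    rw [← inv_div, Real.log_inv]; ring
  rw [h2] at h1
  linarith

lemma second_moment {n : ℕ} (m : T → ℝ) (hm : ∀ t, 0 ≤ m t) (hm1 : ∑ t, m t = 1) (t : T) :
    ∑ τ : Fin n → T, (∏ i, m (τ i)) * (∑ i, ((if τ i = t then (1:ℝ) else 0) - m t)) ^ 2 ≤ n := by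
  set x : T → ℝ := fun s => (if s = t then (1:ℝ) else 0) - m t with hx
  have hmt : m t ≤ 1 := by
    rw [← hm1]; exact Finset.single_le_sum (fun s _ => hm s) (Finset.mem_univ t)
  have hx0 : ∑ s, m s * x s = 0 := by
    simp only [hx, mul_sub, Finset.sum_sub_distrib, ← Finset.sum_mul, hm1]
    simp
  have hx2 : ∀ s, x s * x s ≤ 1 := by
    intro s
    have := hm t
    simp only [hx]; split_ifs <;> nlinarith
  have key : ∀ i j : Fin n, ∑ τ : Fin n → T, (∏ l, m (τ l)) * (x (τ i) * x (τ j))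
      ≤ if i = j then 1 else 0 := by
    intro i j
    have e : ∀ τ : Fin n → T, (∏ l, m (τ l)) * (x (τ i) * x (τ j)) =
        ∏ l, (m (τ l) * (if l = i then x (τ l) else 1) * (if l = j then x (τ l) else 1)) := by
      intro τ
      simp only [Finset.prod_mul_distrib, Finset.prod_ite_eq', Finset.mem_univ, if_true]
      ring
    simp only [e]
    rw [sum_prod_pow n (fun l s => m s * (if l = i then x s else 1) * (if l = j then x s else 1))]
    split_ifs with hij
    · subst hij
      apply Finset.prod_le_one
      · intro l _
        apply Finset.sum_nonneg
        intro s _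
        split_ifs
        · have := hm s; rw [mul_assoc]; exact mul_nonneg this (mul_self_nonneg _)
        · simpa using hm s
      · intro l _
        rw [← hm1]
        apply Finset.sum_le_sum
        intro s _
        split_ifs
        · rw [mul_assoc]; exact mul_le_of_le_one_right (hm s) (hx2 s)
        · simp [hm1]
    · apply le_of_eq
      apply Finset.prod_eq_zero (Finset.mem_univ i)
      simp only [if_true, if_neg hij, mul_one]
      exact hx0
  calc _ = ∑ τ : Fin n → T, ∑ i, ∑ j, (∏ l, m (τ l)) * (x (τ i) * x (τ j)) := by
        apply Finset.sum_congr rfl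
        intro τ _
        rw [sq, Finset.sum_mul_sum, Finset.mul_sum]
        apply Finset.sum_congr rfl
        intro i _
        rw [Finset.mul_sum]
    _ = ∑ i, ∑ j, ∑ τ : Fin n → T, (∏ l, m (τ l)) * (x (τ i) * x (τ j)) := by
        rw [Finset.sum_comm]
        apply Finset.sum_congr rfl
        intro i _
        rw [Finset.sum_comm]
    _ ≤ ∑ i : Fin n, ∑ j : Fin n, if i = j then 1 else 0 :=
        Finset.sum_le_sum fun i _ => Finset.sum_le_sum fun j _ => key i j
    _ = n := by simp

lemma lln {n : ℕ} (hn : 1 ≤ n) (m : T → ℝ) (hm : ∀ t, 0 ≤ m t) (hm1 : ∑ t, m t = 1) (η : ℝ)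
    (hη : 0 < η) :
    1 - Fintype.card T / (n * η ^ 2) ≤
      ∑ τ : Fin n → T, if ∀ t, |empW τ t - m t| ≤ η then ∏ i, m (τ i) else 0 := by
  have hn0 : (0:ℝ) < n := by positivity
  have tot : ∑ τ : Fin n → T, ∏ i, m (τ i) = 1 := by
    rw [sum_prod_pow n (fun _ t => m t)]; simp [hm1]
  have hb : ∀ τ : Fin n → T, ∏ i, m (τ i) ≤
      (if ∀ t, |empW τ t - m t| ≤ η then ∏ i, m (τ i) else 0) +
      ∑ t, (∏ i, m (τ i)) * (∑ i, ((if τ i = t then (1:ℝ) else 0) - m t)) ^ 2 / (n * η) ^ 2 := by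
    intro τ
    have hp : 0 ≤ ∏ i, m (τ i) := Finset.prod_nonneg fun i _ => hm _
    have hs : ∀ t, 0 ≤ (∏ i, m (τ i)) *
        (∑ i, ((if τ i = t then (1:ℝ) else 0) - m t)) ^ 2 / (n * η) ^ 2 := fun t => by positivity
    split_ifs with h
    · have := Finset.sum_nonneg fun t (_ : t ∈ Finset.univ) => hs t
      linarith
    · push Not at h
      obtain ⟨t, ht⟩ := h
      rw [zero_add]
      refine le_trans ?_ (Finset.single_le_sum (fun t _ => hs t) (Finset.mem_univ t))
      have e : ∑ i, ((if τ i = t then (1:ℝ) else 0) - m t) = n * (empW τ t - m t) := by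
        rw [Finset.sum_sub_distrib, empW]
        simp
        field_simp
      rw [e, le_div_iff₀ (by positivity), mul_pow, mul_pow]
      have : η ^ 2 ≤ (empW τ t - m t) ^ 2 := by
        rw [← sq_abs (empW τ t - m t)]
        gcongr
      gcongr
  have h1 := Finset.sum_le_sum fun τ (_ : τ ∈ (Finset.univ : Finset (Fin n → T))) => hb τ
  rw [tot, Finset.sum_add_distrib, Finset.sum_comm] at h1
  have h2 : ∑ t : T, ∑ τ : Fin n → T, (∏ i, m (τ i)) *
      (∑ i, ((if τ i = t then (1:ℝ) else 0) - m t)) ^ 2 / (n * η) ^ 2 ≤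
      ∑ t : T, n / (n * η) ^ 2 := by
    apply Finset.sum_le_sum
    intro t _
    rw [← Finset.sum_div]
    gcongr
    exact second_moment m hm hm1 t
  have h3 : ∑ t : T, (n:ℝ) / (n * η) ^ 2 = Fintype.card T / (n * η ^ 2) := by
    rw [Finset.sum_const, nsmul_eq_mul, Finset.card_univ]; field_simp
  linarith

lemma sanov_lower (m : T → ℝ) (hm : ∀ t, 0 ≤ m t) (hm1 : ∑ t, m t = 1) (v : T → ℝ)
    (hv : ∀ t, 0 < v t) (u : ℕ → T → ℝ) (hu : ∀ n t, 0 ≤ u n t)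
    (huv : ∀ t, Tendsto (fun n => u n t) atTop (nhds (v t))) (η ε : ℝ) (hη : 0 < η) (hε : 0 < ε) :
    ∀ᶠ n : ℕ in atTop, Real.exp (-(n : ℝ) * (∑ t, m t * Real.log (m t / v t) + ε)) ≤
      ∑ τ : Fin n → T, if ∀ t, |empW τ t - m t| ≤ η then ∏ i, u n (τ i) else 0 := by
  set h := ∑ t, m t * Real.log (m t / v t) with hh
  have tl : ∀ t, Tendsto (fun n => Real.log (m t / u n t)) atTop (nhds (Real.log (m t / v t))) := by
    intro t
    by_cases h0 : m t = 0
    · simp [h0]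
    · exact (Real.continuousAt_log (div_ne_zero h0 (hv t).ne')).tendsto.comp
        (tendsto_const_nhds.div (huv t) (hv t).ne')
  set B := ∑ t, |Real.log (m t / v t)| with hB
  have hB0 : 0 ≤ B := Finset.sum_nonneg fun t _ => abs_nonneg _
  obtain ⟨η', hη'0, hη'1, hη'2⟩ : ∃ η' : ℝ, 0 < η' ∧ η' ≤ η ∧ η' * B < ε / 2 := by
    refine ⟨min η (ε / 2 / (B + 1)), by positivity, min_le_left _ _, ?_⟩
    calc min η (ε / 2 / (B + 1)) * B ≤ (ε / 2 / (B + 1)) * B := by gcongr; exact min_le_right _ _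
      _ < ε / 2 := by rw [div_mul_eq_mul_div, div_lt_iff₀ (by positivity)]; nlinarith
  have t1 : Tendsto (fun n => ∑ t, m t * Real.log (m t / u n t) +
      η' * ∑ t, |Real.log (m t / u n t)|) atTop (nhds (h + η' * B)) :=
    (tendsto_finsetSum _ fun t _ => (tl t).const_mul _).add
      ((tendsto_finsetSum _ fun t _ => (tl t).abs).const_mul _)
  have t2 : Tendsto (fun n : ℕ => 1 - (Fintype.card T : ℝ) / (n * η' ^ 2)) atTop (nhds 1) := by
    have : Tendsto (fun n : ℕ => (Fintype.card T : ℝ) / (n * η' ^ 2)) atTop (nhds 0) :=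
      tendsto_const_nhds.div_atTop
        (tendsto_natCast_atTop_atTop.atTop_mul_const (by positivity))
    simpa using this.const_sub 1
  have t3 : Tendsto (fun n : ℕ => Real.exp (-((n:ℝ) * (ε / 2)))) atTop (nhds 0) :=
    Real.tendsto_exp_neg_atTop_nhds_zero.comp
      (tendsto_natCast_atTop_atTop.atTop_mul_const (by positivity))
  have ev4 : ∀ᶠ n in atTop, ∀ t, 0 < u n t := by
    rw [eventually_all]
    intro t
    exact (huv t).eventually (lt_mem_nhds (hv t))
  filter_upwards [t1.eventually (gt_mem_nhds (show h + η' * B < h + ε / 2 by linarith)),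
    t2.eventually (lt_mem_nhds (show (1:ℝ)/2 < 1 by norm_num)),
    t3.eventually (gt_mem_nhds (show (0:ℝ) < 1/2 by norm_num)), ev4, eventually_ge_atTop 1]
    with n e1 e2 e3 e4 hn
  have hn0 : (0:ℝ) < n := by positivity
  have l1 := lln hn m hm hm1 η' hη'0
  calc Real.exp (-(n : ℝ) * (h + ε))
      = Real.exp (-((n:ℝ) * (ε / 2))) * Real.exp (-(n:ℝ) * (h + ε / 2)) := by
        rw [← Real.exp_add]; congr 1; ring
    _ ≤ (∑ τ : Fin n → T, if ∀ t, |empW τ t - m t| ≤ η' then ∏ i, m (τ i) else 0) *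
          Real.exp (-(n:ℝ) * (h + ε / 2)) := by
        gcongr; linarith
    _ ≤ _ := by
        rw [Finset.sum_mul]
        apply Finset.sum_le_sum
        intro τ _
        have hup : 0 < ∏ i, u n (τ i) := Finset.prod_pos fun i _ => e4 _
        by_cases hτ : ∀ t, |empW τ t - m t| ≤ η'
        · rw [if_pos hτ, if_pos (fun t => (hτ t).trans hη'1)]
          by_cases hz : ∀ i, 0 < m (τ i)
          · have hlog : Real.log (∏ i, (m (τ i) / u n (τ i))) ≤ n * (h + ε / 2) := by
              rw [Real.log_prod (fun i _ => (div_pos (hz i) (e4 _)).ne'),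
                emp_sum hn τ (fun t => Real.log (m t / u n t))]
              gcongr
              refine le_trans ?_ e1.le
              rw [Finset.mul_sum, ← Finset.sum_add_distrib]
              apply Finset.sum_le_sum
              intro t _
              have := hτ t
              have a1 : (empW τ t - m t) * Real.log (m t / u n t)
                  ≤ η' * |Real.log (m t / u n t)| := by
                refine (le_abs_self _).trans ?_
                rw [abs_mul]; gcongr
              linarith
            have hpm : 0 < ∏ i, (m (τ i) / u n (τ i)) :=
              Finset.prod_pos fun i _ => div_pos (hz i) (e4 _)
            rw [Real.log_le_iff_le_exp hpm, Finset.prod_div_distrib, div_le_iff₀ hup] at hlog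
            calc (∏ i, m (τ i)) * Real.exp (-(n:ℝ) * (h + ε / 2))
                ≤ Real.exp (n * (h + ε / 2)) * (∏ i, u n (τ i)) *
                  Real.exp (-(n:ℝ) * (h + ε / 2)) := by gcongr
              _ = ∏ i, u n (τ i) := by
                  rw [mul_right_comm, ← Real.exp_add]; simp
          · push Not at hz
            obtain ⟨i, hi⟩ := hz
            rw [Finset.prod_eq_zero (Finset.mem_univ i) (le_antisymm hi (hm _)), zero_mul]
            exact hup.le
        · rw [if_neg hτ, zero_mul]
          split_ifs
          · exact hup.le
          · exact le_rfl

end finite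

lemma sum_pairs (e n : ℕ) (c : Fin n → Fin n → ℝ) :
    ∑ i : Fin (e + 2) → Fin n, c (i 0) (i 1) = (n : ℝ) ^ e * ∑ a, ∑ b, c a b := by
  rw [← (Fin.consEquiv (fun _ : Fin (e + 2) => Fin n)).sum_comp, Fintype.sum_prod_type,
    Finset.mul_sum]
  apply Finset.sum_congr rfl
  intro a _
  have h1 : ∀ g : Fin (e + 1) → Fin n, c ((Fin.consEquiv (fun _ : Fin (e + 2) => Fin n)) (a, g) 0)
      ((Fin.consEquiv (fun _ : Fin (e + 2) => Fin n)) (a, g) 1) = c a (g 0) := by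
    intro g; rfl
  simp only [h1]
  rw [← (Fin.consEquiv (fun _ : Fin (e + 1) => Fin n)).sum_comp, Fintype.sum_prod_type,
    Finset.mul_sum]
  apply Finset.sum_congr rfl
  intro b _
  have h2 : ∀ g : Fin e → Fin n, c a ((Fin.consEquiv (fun _ : Fin (e + 1) => Fin n)) (b, g) 0)
      = c a b := by
    intro g; rfl
  simp only [h2]
  simp

/-- sharing a large divisor -/
def shareP (k n x y : ℕ) : Prop := ∃ p ∈ Finset.Ioo k (n + 1), p ∣ x ∧ p ∣ y

open Classical in
lemma det_pairs {n : ℕ} [NeZero n] (h : Fin n → Fin n → Prop) (hs : ∀ i j, h i j → h j i) (δ : ℝ)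
    (H : δ * (n : ℝ) ^ 2 < ∑ i, ∑ j, if h i j then (1 : ℝ) else 0) :
    ∃ s : Fin n, δ * n - 1 < 2 * ((Finset.univ.filter fun i => i < s - i ∧ h i (s - i)).card : ℝ) := by
  by_contra hcon
  push Not at hcon
  have h1 : ∑ i, ∑ j, (if h i j then (1 : ℝ) else 0) ≤
      ∑ i, ∑ j, ((if i < j ∧ h i j then (1 : ℝ) else 0) + (if j < i ∧ h j i then (1 : ℝ) else 0)
        + (if i = j then 1 else 0)) := by
    apply Finset.sum_le_sum; intro i _
    apply Finset.sum_le_sum; intro j _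
    by_cases hij : h i j
    · have := hs _ _ hij
      rcases lt_trichotomy i j with hl | hl | hl
      · simp [hij, hl, not_lt_of_gt hl, hl.ne]
      · simp [hij, hl]; split_ifs <;> norm_num
      · simp [hij, hl, not_lt_of_gt hl, hl.ne', this]
    · rw [if_neg hij]; positivity
  have h2 : ∑ i : Fin n, ∑ j : Fin n, (if j < i ∧ h j i then (1 : ℝ) else 0)
      = ∑ i, ∑ j, (if i < j ∧ h i j then (1 : ℝ) else 0) := Finset.sum_comm
  have h3 : ∑ i : Fin n, ∑ j : Fin n, (if i < j ∧ h i j then (1 : ℝ) else 0)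
      = ∑ s : Fin n, ((Finset.univ.filter fun i => i < s - i ∧ h i (s - i)).card : ℝ) := by
    have : ∀ s : Fin n, ((Finset.univ.filter fun i => i < s - i ∧ h i (s - i)).card : ℝ)
        = ∑ i, if i < s - i ∧ h i (s - i) then (1 : ℝ) else 0 := by
      intro s; simp
    simp only [this]
    rw [Finset.sum_comm (s := (Finset.univ : Finset (Fin n)))
      (f := fun s i => if i < s - i ∧ h i (s - i) then (1 : ℝ) else 0)]
    apply Finset.sum_congr rfl
    intro i _
    exact ((Equiv.subRight i).sum_comp (fun j => if i < j ∧ h i j then (1:ℝ) else 0)).symm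
  simp only [Finset.sum_add_distrib] at h1
  rw [h2, h3] at h1
  have h4 : ∑ s : Fin n, ((Finset.univ.filter fun i => i < s - i ∧ h i (s - i)).card : ℝ) * 2 ≤
      ∑ s : Fin n, (δ * n - 1) := Finset.sum_le_sum fun s _ => by linarith [hcon s]
  rw [← Finset.sum_mul] at h4
  have h5 : ∑ i : Fin n, ∑ j : Fin n, (if i = j then (1:ℝ) else 0) = n := by simp
  rw [h5] at h1
  simp only [Finset.sum_const, Finset.card_univ, Fintype.card_fin, nsmul_eq_mul] at h4
  nlinarith

lemma dvd_prob (n : ℕ) (r : ℕ) (hr : 0 < r) :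
    (uniformOn (Set.Icc 1 n)).real {x | r ∣ x} ≤ (r : ℝ)⁻¹ := by
  classical
  rw [unif_real]
  have : ((Finset.Icc 1 n).filter (· ∈ {x | r ∣ x})) = (Finset.Ioc 0 n).filter (r ∣ ·) := by
    ext x; simp [Nat.succ_le_iff]
  rw [this, Nat.Ioc_filter_dvd_card_eq_div]
  rcases Nat.eq_zero_or_pos n with h | h
  · subst h; simp
  rw [div_le_iff₀ (by positivity), inv_mul_eq_div]
  exact Nat.cast_div_le

lemma box_prob (n : ℕ) (hn : 1 ≤ n) (r : Fin n → ℕ) (hr : ∀ i, 0 < r i) :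
    (unifVec n).real {ω | ∀ j, r j ∣ ω j} ≤ ∏ j, (r j : ℝ)⁻¹ := by
  have := unifVec_prob n hn
  have h3 : {ω : Fin n → ℕ | ∀ j, r j ∣ ω j} = Set.pi Set.univ fun i => {x | r i ∣ x} := by
    ext y; simp
  rw [h3, measureReal_def, unifVec, Measure.pi_pi, ENNReal.toReal_prod]
  apply Finset.prod_le_prod
  · intro i _; positivity
  · intro i _; exact dvd_prob n _ (hr i)

/-- candidate divisors -/
def candP (k n : ℕ) (S : Finset (Fin n)) (i : Fin n) : Finset ℕ :=
  if i ∈ S then Finset.Ioo k (n + 1) else {1}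

lemma cand_sum (k n : ℕ) (S : Finset (Fin n)) :
    ∑ p ∈ Fintype.piFinset (candP k n S), ∏ j, (((p j : ℕ) : ℝ) ^ 2)⁻¹ ≤ (2 / ((k : ℝ) + 1)) ^ S.card := by
  rw [← Finset.prod_univ_sum (candP k n S) (fun _ p => ((p : ℝ) ^ 2)⁻¹)]
  calc _ ≤ ∏ j : Fin n, (if j ∈ S then 2 / ((k : ℝ) + 1) else 1) := by
        apply Finset.prod_le_prod
        · intro i _; positivity
        · intro i _
          unfold candP
          split_ifs
          · exact sum_Ioo_inv_sq_le k (n + 1)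
          · simp
    _ = _ := by simp [div_pow]

lemma sS_prob (k n : ℕ) [NeZero n] (hn : 1 ≤ n) (s : Fin n) (S : Finset (Fin n)) :
    (unifVec n).real (⋃ p ∈ Fintype.piFinset (candP k n S), {ω | ∀ j, p j * p (s - j) ∣ ω j})
      ≤ (2 / ((k : ℝ) + 1)) ^ S.card := by
  refine (measureReal_biUnion_finset_le _ _).trans (le_trans ?_ (cand_sum k n S))
  apply Finset.sum_le_sum
  intro p hp
  have hpos : ∀ j, 0 < p j := by
    intro j
    have := (Fintype.mem_piFinset.1 hp) j
    unfold candP at this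
    split_ifs at this
    · have := (Finset.mem_Ioo.1 this).1; omega
    · simp at this; omega
  refine (box_prob n hn (fun j => p j * p (s - j)) (fun j => Nat.mul_pos (hpos _) (hpos _))).trans
    (le_of_eq ?_)
  simp only [Nat.cast_mul, mul_inv, Finset.prod_mul_distrib, sq]
  congr 1
  exact (Equiv.subLeft s).prod_comp (fun j => ((p j : ℝ))⁻¹)

open Classical in
lemma union_prob (k n : ℕ) [NeZero n] (hn : 1 ≤ n) (c δ : ℝ) (hc0 : 0 ≤ c)
    (hc : 2 / ((k : ℝ) + 1) ≤ Real.exp (-c)) :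
    (unifVec n).real (⋃ s : Fin n, ⋃ S ∈ (Finset.univ : Finset (Finset (Fin n))).filter
        (fun S => δ * n ≤ 4 * (S.card : ℝ)),
      ⋃ p ∈ Fintype.piFinset (candP k n S), {ω | ∀ j, p j * p (s - j) ∣ ω j})
      ≤ Real.exp (2 * n - c * (δ * n / 4)) := by
  refine (measureReal_iUnion_fintype_le _).trans ?_
  have h1 : ∀ s : Fin n, (unifVec n).real (⋃ S ∈ (Finset.univ : Finset (Finset (Fin n))).filter
        (fun S => δ * n ≤ 4 * (S.card : ℝ)),
      ⋃ p ∈ Fintype.piFinset (candP k n S), {ω | ∀ j, p j * p (s - j) ∣ ω j})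
      ≤ 2 ^ n * Real.exp (- c * (δ * n / 4)) := by
    intro s
    refine (measureReal_biUnion_finset_le _ _).trans ?_
    calc _ ≤ ∑ S ∈ (Finset.univ : Finset (Finset (Fin n))).filter
            (fun S => δ * n ≤ 4 * (S.card : ℝ)), Real.exp (- c * (δ * n / 4)) := by
          apply Finset.sum_le_sum
          intro S hS
          refine (sS_prob k n hn s S).trans ?_
          refine (pow_le_pow_left₀ (by positivity) hc _).trans ?_
          rw [← Real.exp_nat_mul]
          apply Real.exp_le_exp.2
          have := (Finset.mem_filter.1 hS).2
          nlinarith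
      _ ≤ ∑ S : Finset (Fin n), Real.exp (- c * (δ * n / 4)) :=
          Finset.sum_le_sum_of_subset_of_nonneg (Finset.filter_subset _ _)
            (fun _ _ _ => (Real.exp_pos _).le)
      _ = _ := by simp
  refine (Finset.sum_le_sum fun s _ => h1 s).trans ?_
  rw [Finset.sum_const, Finset.card_univ, Fintype.card_fin, nsmul_eq_mul]
  have e1 : (n : ℝ) ≤ Real.exp n := by linarith [Real.add_one_le_exp (n:ℝ)]
  have e2 : (2 : ℝ) ^ n ≤ Real.exp n := by
    have : (2 : ℝ) ≤ Real.exp 1 := by linarith [Real.add_one_le_exp (1:ℝ)]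
    calc (2:ℝ) ^ n ≤ (Real.exp 1) ^ n := pow_le_pow_left₀ (by norm_num) this _
      _ = _ := by rw [← Real.exp_nat_mul]; simp
  rw [show 2 * (n:ℝ) - c * (δ * n / 4) = n + (n + - c * (δ * n / 4)) by ring, Real.exp_add,
    Real.exp_add]
  gcongr

open Classical in
lemma share_prob (k n : ℕ) (hn : 1 ≤ n) (c δ : ℝ) (hc0 : 0 ≤ c) (hn2 : 2 ≤ δ * n)
    (hc : 2 / ((k : ℝ) + 1) ≤ Real.exp (-c)) :
    (unifVec n).real {ω | δ * (n : ℝ) ^ 2 < ∑ i, ∑ j, if shareP k n (ω i) (ω j) then (1 : ℝ) else 0}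
      ≤ Real.exp (2 * n - c * (δ * n / 4)) := by
  haveI : NeZero n := ⟨by omega⟩
  have := unifVec_prob n hn
  haveI : IsProbabilityMeasure (unifVec n) := by unfold unifVec; infer_instance
  refine le_trans (measureReal_mono ?_) (union_prob k n hn c δ hc0 hc)
  intro ω hω
  obtain ⟨s, hs⟩ := det_pairs (fun i j => shareP k n (ω i) (ω j))
    (fun i j ⟨p, h1, h2, h3⟩ => ⟨p, h1, h3, h2⟩) δ hω
  set S := Finset.univ.filter fun i => i < s - i ∧ shareP k n (ω i) (ω (s - i)) with hS
  have hch : ∀ i, ∃ p, p ∈ candP k n S i ∧ p ∣ ω i ∧ p ∣ ω (s - i) := by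
    intro i
    unfold candP
    split_ifs with h
    · exact (Finset.mem_filter.1 h).2.2
    · exact ⟨1, by simp⟩
  choose p hp1 hp2 hp3 using hch
  simp only [Set.mem_iUnion]
  refine ⟨s, S, ?_, p, Fintype.mem_piFinset.2 hp1, ?_⟩
  · simp only [Finset.mem_filter, Finset.mem_univ, true_and]; linarith
  · intro j
    have hone : ∀ i, i ∉ S → p i = 1 := by
      intro i hi
      have := hp1 i
      simpa [candP, hi] using this
    by_cases hj : j ∈ S
    · have : s - j ∉ S := by
        intro h
        have h1 := (Finset.mem_filter.1 h).2.1
        have h2 := (Finset.mem_filter.1 hj).2.1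
        rw [sub_sub_cancel] at h1
        exact absurd h1 (not_lt_of_gt h2)
      rw [hone _ this, mul_one]; exact hp2 j
    · rw [hone _ hj, one_mul]
      have := hp3 (s - j)
      rwa [sub_sub_cancel] at this

/-- the statistic -/
noncomputable def Wn (d n : ℕ) (ω : Fin n → ℕ) : ℝ :=
  (1 / (n : ℝ) ^ d) * (∑ i : Fin d → Fin n,
    if Finset.univ.gcd (fun t : Fin d => ω (i t)) = 1 then (1 : ℝ) else 0)

lemma Wn_le (k d n : ℕ) (ω : Fin n → ℕ) : Wn d n ω ≤ FK k d (empW fun i => tyN k (ω i)) := by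
  rw [← emp_FK, Wn]
  refine mul_le_mul_of_nonneg_left ?_ (by positivity)
  apply Finset.sum_le_sum
  intro i _
  split_ifs with h
  · unfold kerK
    rw [if_neg]
    rintro ⟨j, hj⟩
    have hp : Nat.Prime (Nat.nth Nat.Prime j) := Nat.prime_nth_prime j
    have : Nat.nth Nat.Prime j ∣ Finset.univ.gcd (fun t : Fin d => ω (i t)) := by
      apply Finset.dvd_gcd
      intro t _
      have := hj t
      simpa [tyN] using this
    rw [h] at this
    exact hp.one_lt.ne' (Nat.dvd_one.1 this)
  · exact (kerK_mem _ _ _).1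

open Classical in
lemma Wn_ge (k e n : ℕ) (hn : 1 ≤ n) (ω : Fin n → ℕ) (hω : ∀ i, ω i ∈ Set.Icc 1 n) :
    FK k (e + 2) (empW fun i => tyN k (ω i)) - Wn (e + 2) n ω ≤
      (1 / (n : ℝ) ^ 2) * ∑ i, ∑ j, if shareP k n (ω i) (ω j) then (1 : ℝ) else 0 := by
  have hn0 : (0:ℝ) < n := by exact_mod_cast hn
  have e1 : (1 / (n : ℝ) ^ 2) * ∑ i, ∑ j, (if shareP k n (ω i) (ω j) then (1 : ℝ) else 0)
      = (1 / (n : ℝ) ^ (e + 2)) * ∑ i : Fin (e + 2) → Fin n,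
        if shareP k n (ω (i 0)) (ω (i 1)) then (1 : ℝ) else 0 := by
    rw [sum_pairs e n (fun a b => if shareP k n (ω a) (ω b) then (1 : ℝ) else 0), pow_add]
    field_simp
  rw [e1, ← emp_FK, Wn, ← mul_sub, ← Finset.sum_sub_distrib]
  refine mul_le_mul_of_nonneg_left ?_ (by positivity)
  apply Finset.sum_le_sum
  intro i _
  have hk := kerK_mem k (e+2) (fun t => tyN k (ω (i t)))
  by_cases hg : Finset.univ.gcd (fun t : Fin (e+2) => ω (i t)) = 1
  · rw [if_pos hg]
    have : (0:ℝ) ≤ if shareP k n (ω (i 0)) (ω (i 1)) then (1 : ℝ) else 0 := by positivity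
    linarith
  rw [if_neg hg]
  obtain ⟨p, hp, hpd⟩ := Nat.exists_prime_and_dvd hg
  have hall : ∀ t, p ∣ ω (i t) := fun t => hpd.trans (Finset.gcd_dvd (Finset.mem_univ t))
  have hj : Nat.nth Nat.Prime (Nat.count Nat.Prime p) = p := Nat.nth_count hp
  by_cases hlt : Nat.count Nat.Prime p < k
  · have : kerK k (e+2) (fun t => tyN k (ω (i t))) = 0 := by
      unfold kerK
      rw [if_pos]
      refine ⟨⟨_, hlt⟩, fun t => ?_⟩
      simp [tyN, hj, hall t]
    rw [this]
    have : (0:ℝ) ≤ if shareP k n (ω (i 0)) (ω (i 1)) then (1 : ℝ) else 0 := by positivity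
    linarith
  · rw [if_pos]
    · linarith
    · refine ⟨p, Finset.mem_Ioo.2 ⟨?_, ?_⟩, hall 0, hall 1⟩
      · have := nth_prime_ge (Nat.count Nat.Prime p)
        omega
      · have h1 := hω (i 0)
        have := Nat.le_of_dvd h1.1 (hall 0)
        have := h1.2
        omega

lemma unifVec_Icc (n : ℕ) (hn : 1 ≤ n) : ∀ᵐ ω ∂(unifVec n), ∀ i, ω i ∈ Set.Icc 1 n := by
  have := unifVec_prob n hn
  rw [ae_all_iff]
  intro i
  have h : ∀ᵐ x ∂(uniformOn (Set.Icc 1 n)), x ∈ Set.Icc 1 n := by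
    rw [uniformOn]
    exact ae_cond_mem (Set.finite_Icc 1 n).measurableSet
  exact (Measure.tendsto_eval_ae_ae (μ := fun _ : Fin n => uniformOn (Set.Icc 1 n)) (i := i)).eventually h

lemma tail (e : ℕ) (δ B : ℝ) (hδ : 0 < δ) (hB : 0 ≤ B) : ∃ K0 : ℕ, ∀ k ≥ K0, ∀ᶠ n : ℕ in atTop,
    (unifVec n).real {ω | δ < FK k (e + 2) (empW fun i => tyN k (ω i)) - Wn (e + 2) n ω}
      ≤ Real.exp (-B * n) := by
  classical
  set c : ℝ := 4 * (B + 2) / δ with hc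
  obtain ⟨K0, hK⟩ := exists_nat_gt (2 / Real.exp (-c))
  refine ⟨K0, fun k hk => ?_⟩
  have hk2 : 2 / ((k : ℝ) + 1) ≤ Real.exp (-c) := by
    rw [div_le_iff₀ (by positivity)]
    rw [div_lt_iff₀ (Real.exp_pos _)] at hK
    have : (K0:ℝ) ≤ k := by exact_mod_cast hk
    nlinarith [Real.exp_pos (-c)]
  filter_upwards [eventually_ge_atTop 1, eventually_ge_atTop ⌈2 / δ⌉₊] with n hn hn2
  have := unifVec_prob n hn
  haveI : IsProbabilityMeasure (unifVec n) := by unfold unifVec; infer_instance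
  have hn0 : (0:ℝ) < n := by exact_mod_cast hn
  have h2 : 2 ≤ δ * n := by
    have := Nat.ceil_le.1 hn2
    rw [div_le_iff₀ hδ] at this
    linarith
  have h3 := share_prob k n hn c δ (by positivity) h2 hk2
  have h4 : 2 * (n:ℝ) - c * (δ * n / 4) = -B * n := by rw [hc]; field_simp; ring
  rw [h4] at h3
  refine le_trans ?_ h3
  rw [measureReal_def, measureReal_def]
  refine ENNReal.toReal_mono (measure_ne_top _ _) (measure_mono_ae ?_)
  filter_upwards [unifVec_Icc n hn] with ω hω hlt
  have h5 := Wn_ge k e n hn ω hω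
  have h6 : δ < _ := hlt
  have h7 := h6.trans_le h5
  rw [one_div, inv_mul_eq_div, lt_div_iff₀ (by positivity)] at h7
  exact h7

lemma integral_tyR (k : ℕ) (μ : Measure ℝ) [IsProbabilityMeasure μ] (φ : (Fin k → Bool) → ℝ) :
    ∫ a, φ (tyR k a) ∂μ = ∑ t, μ.real (tyR k ⁻¹' {t}) * φ t := by
  have hm := measurable_tyR k
  rw [← integral_map (φ := tyR k) (f := φ) hm.aemeasurable
    (measurable_of_finite φ).aestronglyMeasurable]
  haveI : IsProbabilityMeasure (μ.map (tyR k)) := Measure.isProbabilityMeasure_map hm.aemeasurable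
  rw [integral_fintype (Integrable.of_finite)]
  apply Finset.sum_congr rfl
  intro t _
  rw [map_measureReal_apply hm (measurableSet_singleton t), smul_eq_mul]

lemma data_proc (ν : Measure ℝ) [IsProbabilityMeasure ν]
    (hν : ∀ (k : ℕ) (t : Fin k → Bool), ν.real (tyR k ⁻¹' {t}) = vW k t) (k : ℕ)
    (μ : Measure ℝ) [IsProbabilityMeasure μ] (h : ℝ) (H : relEntropy μ ν ≤ (h : EReal)) :
    ∑ t, μ.real (tyR k ⁻¹' {t}) * Real.log (μ.real (tyR k ⁻¹' {t}) / vW k t) ≤ h := by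
  set m : (Fin k → Bool) → ℝ := fun t => μ.real (tyR k ⁻¹' {t}) with hm
  have hm0 : ∀ t, 0 ≤ m t := fun t => measureReal_nonneg
  have hsv : ∑ t, vW k t = 1 := by
    have := sum_marg k ν
    simpa only [hν] using this
  have key : ∀ N : ℕ, ∑ t, m t * Real.log (m t / vW k t) ≤ h + Real.exp (-N) := by
    intro N
    let φ : (Fin k → Bool) → ℝ := fun t => if 0 < m t then Real.log (m t / vW k t) else -(N:ℝ)
    have h1 := relEntropy_fy H (fun a => φ (tyR k a))
      ((measurable_of_finite φ).comp (measurable_tyR k)) (∑ t, |φ t|)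
      (fun a => Finset.single_le_sum (f := fun t => |φ t|) (fun _ _ => abs_nonneg _)
        (Finset.mem_univ (tyR k a)))
    have e1 := integral_tyR k μ φ
    have e2 := integral_tyR k ν (fun t => Real.exp (φ t) - 1)
    rw [e1, e2] at h1
    simp only [hν] at h1
    have e3 : ∑ t, μ.real (tyR k ⁻¹' {t}) * φ t = ∑ t, m t * Real.log (m t / vW k t) := by
      apply Finset.sum_congr rfl
      intro t _
      rcases (hm0 t).eq_or_lt with h0 | h0
      · have : μ.real (tyR k ⁻¹' {t}) = 0 := h0.symm
        rw [this, ← h0]; simp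
      · simp only [φ, if_pos h0]; rfl
    have e4 : ∑ t, vW k t * (Real.exp (φ t) - 1) ≤ ∑ t, (m t + vW k t * Real.exp (-N) - vW k t) := by
      apply Finset.sum_le_sum
      intro t _
      have hv := vW_pos k t
      simp only [φ]
      split_ifs with h0
      · rw [Real.exp_log (by positivity)]
        have : vW k t * (m t / vW k t - 1) = m t - vW k t := by field_simp
        rw [this]
        nlinarith [Real.exp_pos (-(N:ℝ))]
      · nlinarith [hm0 t]
    rw [Finset.sum_sub_distrib, Finset.sum_add_distrib, ← Finset.sum_mul, hsv, sum_marg k μ] at e4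
    linarith
  have ht : Tendsto (fun N : ℕ => h + Real.exp (-(N:ℝ))) atTop (nhds (h + 0)) :=
    tendsto_const_nhds.add (Real.tendsto_exp_neg_atTop_nhds_zero.comp tendsto_natCast_atTop_atTop)
  rw [add_zero] at ht
  exact ge_of_tendsto' ht key

lemma lift_meas (ν : Measure ℝ) [IsProbabilityMeasure ν]
    (hν : ∀ (k : ℕ) (t : Fin k → Bool), ν.real (tyR k ⁻¹' {t}) = vW k t) (k : ℕ)
    (m : (Fin k → Bool) → ℝ) (hm : ∀ t, 0 ≤ m t) (hm1 : ∑ t, m t = 1) :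
    ∃ μ : Measure ℝ, IsProbabilityMeasure μ ∧ (∀ t, μ.real (tyR k ⁻¹' {t}) = m t) ∧
      relEntropy μ ν ≤ ((∑ t, m t * Real.log (m t / vW k t) : ℝ) : EReal) := by
  let w : (Fin k → Bool) → ℝ := fun t => m t / vW k t
  have hw0 : ∀ t, 0 ≤ w t := fun t => div_nonneg (hm t) (vW_pos k t).le
  have hwv : ∀ t, vW k t * w t = m t := fun t => by
    have := vW_pos k t
    simp only [w]; field_simp
  have hsv : ∑ t, vW k t = 1 := by
    have := sum_marg k ν
    simpa only [hν] using this
  have hintg : ∀ φ : (Fin k → Bool) → ℝ, Integrable (fun a => φ (tyR k a)) ν := fun φ =>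
    Integrable.of_bound ((measurable_of_finite φ).comp (measurable_tyR k)).aestronglyMeasurable
      (∑ t, |φ t|) (ae_of_all _ fun a => Finset.single_le_sum (f := fun t => |φ t|)
        (fun _ _ => abs_nonneg _) (Finset.mem_univ (tyR k a)))
  have hlint : ∀ φ : (Fin k → Bool) → ℝ, (∀ t, 0 ≤ φ t) →
      ∫⁻ a, ENNReal.ofReal (φ (tyR k a)) ∂ν = ENNReal.ofReal (∑ t, vW k t * φ t) := by
    intro φ hφ
    rw [← ofReal_integral_eq_lintegral_ofReal (hintg φ) (ae_of_all _ fun a => hφ _),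
      integral_tyR]
    simp only [hν]
  let f : ℝ → ℝ≥0∞ := fun a => ENNReal.ofReal (w (tyR k a))
  have hfm : Measurable f :=
    ((measurable_of_finite (fun t => ENNReal.ofReal (w t))).comp (measurable_tyR k))
  let μ := ν.withDensity f
  have hprob : IsProbabilityMeasure μ := by
    constructor
    rw [withDensity_apply _ MeasurableSet.univ, Measure.restrict_univ, hlint w hw0]
    simp [hwv, hm1]
  refine ⟨μ, hprob, ?_, ?_⟩
  · intro t
    have hE := measurable_tyR k (measurableSet_singleton t)
    rw [measureReal_def, withDensity_apply _ hE]
    have : ∫⁻ a in tyR k ⁻¹' {t}, f a ∂ν = ∫⁻ a in tyR k ⁻¹' {t}, ENNReal.ofReal (w t) ∂ν := by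
      apply setLIntegral_congr_fun hE
      intro a ha
      have : tyR k a = t := ha
      simp only [f, this]
    rw [this, setLIntegral_const, ENNReal.toReal_mul, ENNReal.toReal_ofReal (hw0 t),
      ← measureReal_def, hν, mul_comm, hwv]
  · have hac : μ ≪ ν := withDensity_absolutelyContinuous _ _
    unfold relEntropy
    rw [if_pos hac]
    have hrn : μ.rnDeriv ν =ᵐ[ν] f := Measure.rnDeriv_withDensity ν hfm
    have h1 : ∫⁻ a, ENNReal.ofReal ((μ.rnDeriv ν a).toReal * Real.log (μ.rnDeriv ν a).toReal
        - (μ.rnDeriv ν a).toReal + 1) ∂ν =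
        ∫⁻ a, ENNReal.ofReal ((fun t => w t * Real.log (w t) - w t + 1) (tyR k a)) ∂ν := by
      apply lintegral_congr_ae
      filter_upwards [hrn] with a ha
      rw [ha]
      simp only [f, ENNReal.toReal_ofReal (hw0 _)]
    have hpos : ∀ t, 0 ≤ w t * Real.log (w t) - w t + 1 := fun t => by
      have := fy_pointwise (w t) 0 (hw0 t)
      simpa using this
    rw [h1, hlint _ hpos, EReal.coe_ennreal_ofReal]
    have h2 : ∑ t, vW k t * (w t * Real.log (w t) - w t + 1) = ∑ t, m t * Real.log (m t / vW k t) := by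
      have : ∀ t, vW k t * (w t * Real.log (w t) - w t + 1) =
          m t * Real.log (m t / vW k t) - m t + vW k t := by
        intro t
        rw [← hwv t]
        have : vW k t * w t / vW k t = w t := by
          have := vW_pos k t
          field_simp
        rw [this]; ring
      simp only [this]
      rw [Finset.sum_add_distrib, Finset.sum_sub_distrib, hm1, hsv]; ring
    rw [h2, max_eq_left]
    rw [← h2]
    exact Finset.sum_nonneg fun t _ => mul_nonneg (vW_pos k t).le (hpos t)

lemma ac_Icc {μ ν : Measure ℝ} [IsProbabilityMeasure μ] [IsProbabilityMeasure ν]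
    (hs : ν (Set.Icc 0 1) = 1) (h : μ ≪ ν) : μ (Set.Icc 0 1) = 1 := by
  rw [prob_compl_eq_zero_iff measurableSet_Icc |>.symm] at hs ⊢
  exact h hs

lemma lower_real (e : ℕ) (ν : Measure ℝ) [IsProbabilityMeasure ν]
    (hν : ∀ (k : ℕ) (t : Fin k → Bool), ν.real (tyR k ⁻¹' {t}) = vW k t)
    (A : Set ℝ) (μ : Measure ℝ) [IsProbabilityMeasure μ] (h ε : ℝ) (hε : 0 < ε)
    (H : relEntropy μ ν ≤ (h : EReal))
    (hx : (∫ y, coprimeKernelD (e + 2) y ∂(Measure.pi fun _ : Fin (e + 2) => μ)) ∈ interior A) :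
    ∀ᶠ n : ℕ in atTop, Real.exp (-(n : ℝ) * (h + ε)) ≤ (unifVec n).real {ω | Wn (e + 2) n ω ∈ A} := by
  classical
  set x := ∫ y, coprimeKernelD (e + 2) y ∂(Measure.pi fun _ : Fin (e + 2) => μ) with hxdef
  obtain ⟨r, hr, hball⟩ := Metric.isOpen_iff.1 isOpen_interior x hx
  set δ := r / 4 with hδ
  have hδ0 : 0 < δ := by positivity
  have h0 := (relEntropy_lintegral H).1
  obtain ⟨K0, hK0⟩ := tail e δ (h + ε) hδ0 (by positivity)
  obtain ⟨K1, hK1⟩ := F_FK_unif e ν hν h δ hδ0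
  set k := max K0 K1
  have ht := hK0 k (le_max_left _ _)
  have hF := hK1 k (le_max_right _ _) μ inferInstance H
  set m : (Fin k → Bool) → ℝ := fun t => μ.real (tyR k ⁻¹' {t}) with hm
  obtain ⟨η, hη, hcont⟩ := Metric.continuous_iff.1 (FK_continuous k (e + 2)) m δ hδ0
  have hs := sanov_lower m (fun t => measureReal_nonneg) (sum_marg k μ) (vW k) (vW_pos k)
    (uW k) (uW_nonneg k) (uW_tendsto k) (η / 2) (ε / 2) (by positivity) (by positivity)
  have hD := data_proc ν hν k μ h H
  filter_upwards [ht, hs, eventually_ge_atTop 1, eventually_ge_atTop ⌈2 / ε⌉₊] with n ht hs hn hn2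
  have := unifVec_prob n hn
  have : IsProbabilityMeasure (unifVec n) := by unfold unifVec; infer_instance
  have hn0 : (1:ℝ) ≤ n := by exact_mod_cast hn
  have h2 : 2 ≤ ε * n := by
    have := Nat.ceil_le.1 hn2
    rw [div_le_iff₀ hε] at this
    linarith
  have hset := unifVec_set hn k {τ : Fin n → Fin k → Bool | ∀ t, |empW τ t - m t| ≤ η / 2}
  have hsub : {ω : Fin n → ℕ | (fun i => tyN k (ω i)) ∈
      {τ : Fin n → Fin k → Bool | ∀ t, |empW τ t - m t| ≤ η / 2}} ⊆
      {ω | Wn (e + 2) n ω ∈ A} ∪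
        {ω | δ < FK k (e + 2) (empW fun i => tyN k (ω i)) - Wn (e + 2) n ω} := by
    intro ω hω
    by_cases hb : δ < FK k (e + 2) (empW fun i => tyN k (ω i)) - Wn (e + 2) n ω
    · exact Or.inr hb
    · left
      have h3 := Wn_le k (e + 2) n ω
      have h4 : dist (FK k (e + 2) (empW fun i => tyN k (ω i))) (FK k (e + 2) m) < δ := by
        apply hcont
        rw [dist_pi_lt_iff hη]
        intro t
        rw [Real.dist_eq]
        have := hω t
        linarith
      rw [Real.dist_eq] at h4
      refine interior_subset (s := A) (hball (?_ : Wn (e + 2) n ω ∈ Metric.ball x r))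
      rw [Metric.mem_ball, Real.dist_eq, abs_lt]
      rw [abs_lt] at h4
      rw [abs_le] at hF
      constructor <;> linarith [h4.1, h4.2, hF.1, hF.2]
  have h5 := (measureReal_mono (μ := unifVec n) hsub).trans (measureReal_union_le _ _)
  rw [hset] at h5
  have h6 : Real.exp (-(n:ℝ) * (h + ε / 2)) ≤
      Real.exp (-(n : ℝ) * (∑ t, m t * Real.log (m t / vW k t) + ε / 2)) := by
    apply Real.exp_le_exp.2
    nlinarith
  have h7 : 2 * Real.exp (-(n:ℝ) * (h + ε)) ≤ Real.exp (-(n:ℝ) * (h + ε / 2)) := by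
    have : -(n:ℝ) * (h + ε / 2) = n * ε / 2 + -(n:ℝ) * (h + ε) := by ring
    rw [this, Real.exp_add]
    have : (2:ℝ) ≤ Real.exp (n * ε / 2) := by
      have := Real.add_one_le_exp (n * ε / 2); linarith
    exact mul_le_mul_of_nonneg_right this (Real.exp_pos _).le
  have h8 : Real.exp (-(h + ε) * n) = Real.exp (-(n:ℝ) * (h + ε)) := by congr 1; ring
  rw [h8] at ht
  simp only [Set.mem_ofPred_eq] at h5 hs
  linarith

lemma upper_step (e : ℕ) (ν : Measure ℝ) [IsProbabilityMeasure ν]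
    (hν : ∀ (k : ℕ) (t : Fin k → Bool), ν.real (tyR k ⁻¹' {t}) = vW k t)
    (A : Set ℝ) (a : ℝ)
    (H : ∃ᶠ n : ℕ in atTop, Real.exp (-(n : ℝ) * a) ≤ (unifVec n).real {ω | Wn (e + 2) n ω ∈ A})
    (δ : ℝ) (hδ : 0 < δ) :
    ∃ μ : Measure ℝ, IsProbabilityMeasure μ ∧ relEntropy μ ν ≤ ((a + δ : ℝ) : EReal) ∧
      ∃ y ∈ A, |∫ y, coprimeKernelD (e + 2) y ∂(Measure.pi fun _ : Fin (e + 2) => μ) - y| ≤ 2 * δ := by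
  classical
  obtain ⟨K0, hK0⟩ := tail e δ (|a| + 1) hδ (by positivity)
  obtain ⟨K1, hK1⟩ := F_FK_unif e ν hν (a + δ) δ hδ
  set k := max K0 K1
  have ht := hK0 k (le_max_left _ _)
  have hF := hK1 k (le_max_right _ _)
  have hlog : ∀ᶠ n : ℕ in atTop, ∑ t, |Real.log (uW k n t / vW k t)| < δ / 2 := by
    have : Tendsto (fun n : ℕ => ∑ t, |Real.log (uW k n t / vW k t)|) atTop
        (nhds (∑ t : Fin k → Bool, |Real.log (vW k t / vW k t)|)) := by
      apply tendsto_finset_sum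
      intro t _
      have hv := vW_pos k t
      exact (((uW_tendsto k t).div_const _).log (by rw [div_self hv.ne']; norm_num)).abs
    have e0 : ∑ t : Fin k → Bool, |Real.log (vW k t / vW k t)| = 0 := by
      apply Finset.sum_eq_zero
      intro t _
      rw [div_self (vW_pos k t).ne']; simp
    rw [e0] at this
    exact this.eventually (gt_mem_nhds (by positivity))
  set C : ℝ := (Fintype.card (Fin k → Bool) : ℝ)
  have hsmall : ∀ᶠ n : ℕ in atTop,
      2 * Real.log 2 / ((n:ℝ) + 1) + C * (Real.log ((n:ℝ) + 1) / ((n:ℝ) + 1)) < δ / 4 := by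
    have tn : Tendsto (fun n : ℕ => (n:ℝ) + 1) atTop atTop :=
      tendsto_atTop_add_const_right _ _ tendsto_natCast_atTop_atTop
    have t1 : Tendsto (fun n : ℕ => 2 * Real.log 2 / ((n:ℝ) + 1)) atTop (nhds 0) :=
      tendsto_const_nhds.div_atTop tn
    have t2 : Tendsto (fun n : ℕ => Real.log ((n:ℝ) + 1) / ((n:ℝ) + 1)) atTop (nhds 0) :=
      (Real.isLittleO_log_id_atTop.tendsto_div_nhds_zero).comp tn
    have t3 := t1.add (t2.const_mul C)
    simp only [mul_zero, add_zero] at t3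
    exact t3.eventually (gt_mem_nhds (by positivity))
  obtain ⟨n, hP, ht, hlog, hsmall, hn⟩ := (H.and_eventually
    (ht.and (hlog.and (hsmall.and (eventually_ge_atTop 1))))).exists
  have := unifVec_prob n hn
  have : IsProbabilityMeasure (unifVec n) := by unfold unifVec; infer_instance
  have hn0 : (1:ℝ) ≤ n := by exact_mod_cast hn
  let E : Set (Fin n → Fin k → Bool) := {τ | ∃ y ∈ A, |FK k (e + 2) (empW τ) - y| ≤ δ}
  have hset := unifVec_set hn k E
  have hsub : {ω | Wn (e + 2) n ω ∈ A} ⊆ {ω : Fin n → ℕ | (fun i => tyN k (ω i)) ∈ E} ∪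
        {ω | δ < FK k (e + 2) (empW fun i => tyN k (ω i)) - Wn (e + 2) n ω} := by
    intro ω hω
    by_cases hb : δ < FK k (e + 2) (empW fun i => tyN k (ω i)) - Wn (e + 2) n ω
    · exact Or.inr hb
    · left
      have h3 := Wn_le k (e + 2) n ω
      refine ⟨_, hω, ?_⟩
      rw [abs_le]; constructor <;> linarith
  have h5 := (measureReal_mono (μ := unifVec n) hsub).trans (measureReal_union_le _ _)
  rw [hset] at h5
  have h7 : 2 * Real.exp (-(|a| + 1) * n) ≤ Real.exp (-(n:ℝ) * a) := by
    have h8 : -(n:ℝ) * a = (n * (|a| - a) + n) + -(|a| + 1) * n := by ring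
    rw [h8, Real.exp_add]
    have : (2:ℝ) ≤ Real.exp (n * (|a| - a) + n) := by
      have h9 := Real.add_one_le_exp (n * (|a| - a) + n)
      have : 0 ≤ n * (|a| - a) := mul_nonneg (by positivity) (by linarith [le_abs_self a])
      linarith
    exact mul_le_mul_of_nonneg_right this (Real.exp_pos _).le
  obtain ⟨τ, ⟨y, hy, hyd⟩, hpos, hent⟩ := sanov_upper hn (uW k n) (uW_nonneg k n) E
    (Real.exp (-(n:ℝ) * a) / 2) (by positivity) (by linarith)
  rw [Real.log_div (Real.exp_pos _).ne' (by norm_num), Real.log_exp] at hent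
  obtain ⟨μ, hμ, hmarg, hrel⟩ := lift_meas ν hν k (empW τ) (emp_nonneg τ) (emp_total hn τ)
  have hle1 : ∀ t, empW τ t ≤ 1 := by
    intro t
    rw [← emp_total hn τ]
    exact Finset.single_le_sum (fun t _ => emp_nonneg τ t) (Finset.mem_univ t)
  have hchange : ∑ t, empW τ t * Real.log (empW τ t / vW k t) ≤
      ∑ t, empW τ t * Real.log (empW τ t / uW k n t) + ∑ t, |Real.log (uW k n t / vW k t)| := by
    rw [← Finset.sum_add_distrib]
    apply Finset.sum_le_sum
    intro t _
    by_cases hex : ∃ i, τ i = t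
    · obtain ⟨i, rfl⟩ := hex
      have p1 := emp_pos τ i
      have p2 := hpos i
      have p3 := vW_pos k (τ i)
      rw [Real.log_div p1.ne' p3.ne', Real.log_div p1.ne' p2.ne']
      have h9 := le_abs_self (Real.log (uW k n (τ i) / vW k (τ i)))
      have h10 := abs_nonneg (Real.log (uW k n (τ i) / vW k (τ i)))
      have h11 := hle1 (τ i)
      have h12 : Real.log (uW k n (τ i) / vW k (τ i)) =
        Real.log (uW k n (τ i)) - Real.log (vW k (τ i)) := Real.log_div p2.ne' p3.ne'
      have h13 : empW τ (τ i) * Real.log (uW k n (τ i) / vW k (τ i)) ≤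
        |Real.log (uW k n (τ i) / vW k (τ i))| := by nlinarith
      rw [h12] at h13
      rw [h12]
      nlinarith
    · have : empW τ t = 0 := by
        unfold empW
        rw [Finset.filter_false_of_mem]
        · simp
        · intro i _ hi; exact hex ⟨i, hi⟩
      rw [this]; simp
  have hsm2 : (-(-(n:ℝ) * a - Real.log 2) + Real.log 2 + C * Real.log ((n:ℝ) + 1)) / n ≤
      a + δ / 2 := by
    rw [div_le_iff₀ (by linarith)]
    have e1 : 2 * Real.log 2 / ((n:ℝ) + 1) + C * (Real.log ((n:ℝ) + 1) / ((n:ℝ) + 1))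
      = (2 * Real.log 2 + C * Real.log ((n:ℝ) + 1)) / ((n:ℝ) + 1) := by ring
    rw [e1, div_lt_iff₀ (by linarith)] at hsmall
    nlinarith
  have hrel2 : relEntropy μ ν ≤ ((a + δ : ℝ) : EReal) := by
    refine hrel.trans ?_
    apply EReal.coe_le_coe_iff.2
    linarith
  refine ⟨μ, hμ, hrel2, y, hy, ?_⟩
  have h13 := hF μ hμ hrel2
  simp only [hmarg] at h13
  have h14 : FK k (e + 2) (fun t => empW τ t) = FK k (e + 2) (empW τ) := rfl
  rw [h14] at h13
  rw [abs_le] at *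
  constructor <;> linarith [h13.1, h13.2, hyd.1, hyd.2]

lemma upper_real (e : ℕ) (ν : Measure ℝ) [IsProbabilityMeasure ν]
    (hν : ∀ (k : ℕ) (t : Fin k → Bool), ν.real (tyR k ⁻¹' {t}) = vW k t)
    (A : Set ℝ) (a : ℝ)
    (H : ∃ᶠ n : ℕ in atTop, Real.exp (-(n : ℝ) * a) ≤ (unifVec n).real {ω | Wn (e + 2) n ω ∈ A}) :
    ∃ ρ : Measure ℝ, IsProbabilityMeasure ρ ∧ relEntropy ρ ν ≤ (a : EReal) ∧
      (∫ y, coprimeKernelD (e + 2) y ∂(Measure.pi fun _ : Fin (e + 2) => ρ)) ∈ closure A := by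
  have hstep := fun m : ℕ => upper_step e ν hν A a H (1 / ((m : ℝ) + 1)) (by positivity)
  choose μ hμ hrel y hy hyd using hstep
  obtain ⟨ρ, hρ, hρrel, U, hU, hconv⟩ := entropy_compact a μ hμ hrel
  refine ⟨ρ, hρ, hρrel, ?_⟩
  rw [Metric.mem_closure_iff]
  intro γ hγ
  obtain ⟨k, hk⟩ := F_FK_unif e ν hν (a + 1) (γ / 5) (by positivity)
  have hk := hk k le_rfl
  have hFK : Tendsto (fun m => FK k (e + 2) (fun t => (μ m).real (tyR k ⁻¹' {t}))) U
      (nhds (FK k (e + 2) (fun t => ρ.real (tyR k ⁻¹' {t})))) := by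
    apply ((FK_continuous k (e + 2)).tendsto _).comp
    rw [tendsto_pi_nhds]
    intro t
    exact hconv _ (measurable_tyR k (measurableSet_singleton t))
  have h1 := Metric.tendsto_nhds.1 hFK (γ / 5) (by positivity)
  have h2 : ∀ᶠ m : ℕ in (U : Filter ℕ), 1 / ((m:ℝ) + 1) < γ / 10 :=
    hU (tendsto_one_div_add_atTop_nhds_zero_nat.eventually (gt_mem_nhds (by positivity)))
  obtain ⟨m, h1, h2⟩ := (h1.and h2).exists
  refine ⟨y m, hy m, ?_⟩
  have hone : 1 / ((m:ℝ) + 1) ≤ 1 := by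
    rw [div_le_one (by positivity)]
    have : (0:ℝ) ≤ m := by positivity
    linarith
  have a1 := hk ρ hρ (hρrel.trans (EReal.coe_le_coe_iff.2 (by linarith)))
  have a2 := hk (μ m) (hμ m) ((hrel m).trans (EReal.coe_le_coe_iff.2 (by linarith)))
  have a3 := hyd m
  rw [Real.dist_eq] at h1 ⊢
  rw [abs_le] at a1 a2 a3
  rw [abs_lt] at h1 ⊢
  constructor <;> linarith [a1.1, a1.2, a2.1, a2.2, a3.1, a3.2, h1.1, h1.2]

lemma log_lower {n : ℕ} (hn : 1 ≤ n) (P : ℝ≥0∞) (hP : P ≠ ⊤) (c : ℝ)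
    (h : Real.exp (-(n:ℝ) * c) ≤ P.toReal) :
    ((-c : ℝ) : EReal) ≤ (((n : ℝ)⁻¹ : ℝ) : EReal) * ENNReal.log P := by
  have hn0 : (0:ℝ) < n := by exact_mod_cast hn
  have hpos : 0 < P.toReal := (Real.exp_pos _).trans_le h
  have : ENNReal.log P = ((Real.log P.toReal : ℝ) : EReal) := by
    conv_lhs => rw [← ENNReal.ofReal_toReal hP]
    rw [ENNReal.log_ofReal, if_neg (not_le.2 hpos)]
  rw [this, ← EReal.coe_mul]
  apply EReal.coe_le_coe_iff.2
  have h1 := (Real.le_log_iff_exp_le hpos).2 h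
  rw [inv_mul_eq_div, le_div_iff₀ hn0]
  linarith

lemma log_upper {n : ℕ} (hn : 1 ≤ n) (P : ℝ≥0∞) (hP : P ≠ ⊤) (c : ℝ)
    (h : P.toReal < Real.exp (-(n:ℝ) * c)) :
    (((n : ℝ)⁻¹ : ℝ) : EReal) * ENNReal.log P ≤ ((-c : ℝ) : EReal) := by
  have hn0 : (0:ℝ) < n := by exact_mod_cast hn
  by_cases hpos : 0 < P.toReal
  · have : ENNReal.log P = ((Real.log P.toReal : ℝ) : EReal) := by
      conv_lhs => rw [← ENNReal.ofReal_toReal hP]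
      rw [ENNReal.log_ofReal, if_neg (not_le.2 hpos)]
    rw [this, ← EReal.coe_mul]
    apply EReal.coe_le_coe_iff.2
    have h1 := (Real.log_le_iff_le_exp hpos).2 h.le
    rw [inv_mul_eq_div, div_le_iff₀ hn0]
    linarith
  · have h0 : P = 0 := by
      have : P.toReal = 0 := le_antisymm (not_lt.1 hpos) ENNReal.toReal_nonneg
      rcases (ENNReal.toReal_eq_zero_iff _).1 this with h | h
      · exact h
      · exact absurd h hP
    rw [h0, ENNReal.log_zero, EReal.coe_mul_bot_of_pos (by positivity)]
    exact bot_le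

lemma main_aux (e : ℕ) (ν : Measure ℝ) [IsProbabilityMeasure ν] (hsupp : ν (Set.Icc 0 1) = 1)
    (hν : ∀ (k : ℕ) (t : Fin k → Bool), ν.real (tyR k ⁻¹' {t}) = vW k t) (A : Set ℝ) :
    -(⨅ x ∈ interior A, coprimeRateD (e + 2) ν x) ≤
        Filter.liminf (fun n : ℕ => (((n : ℝ)⁻¹ : ℝ) : EReal) *
              ENNReal.log ((unifVec n) {ω | Wn (e + 2) n ω ∈ A})) atTop ∧
      Filter.limsup (fun n : ℕ => (((n : ℝ)⁻¹ : ℝ) : EReal) *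
              ENNReal.log ((unifVec n) {ω | Wn (e + 2) n ω ∈ A})) atTop
        ≤ -(⨅ x ∈ closure A, coprimeRateD (e + 2) ν x) := by
  have hfin : ∀ n : ℕ, 1 ≤ n → (unifVec n) {ω | Wn (e + 2) n ω ∈ A} ≠ ⊤ := by
    intro n hn
    have := unifVec_prob n hn
    have : IsProbabilityMeasure (unifVec n) := by unfold unifVec; infer_instance
    exact measure_ne_top _ _
  constructor
  · rw [EReal.neg_le]
    apply le_iInf₂
    intro x hx
    unfold coprimeRateD
    apply le_iInf₂
    rintro μ ⟨hμ, -, hintg⟩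
    rw [EReal.neg_le]
    by_contra hcon
    push Not at hcon
    obtain ⟨r, hr1, hr2⟩ := EReal.lt_iff_exists_real_btwn.1 hcon
    obtain ⟨r', hr1', hr2'⟩ := EReal.lt_iff_exists_real_btwn.1 hr2
    have hrr : r < r' := EReal.coe_lt_coe_iff.1 hr1'
    have hrel : relEntropy μ ν ≤ ((-r' : ℝ) : EReal) := by
      have := EReal.neg_lt_neg_iff.2 hr2'
      rw [neg_neg] at this
      exact this.le
    have hl := lower_real e ν hν A μ (-r') (r' - r) (by linarith) hrel (by rw [hintg]; exact hx)
    have : ((r : ℝ) : EReal) ≤ Filter.liminf (fun n : ℕ => (((n : ℝ)⁻¹ : ℝ) : EReal) *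
              ENNReal.log ((unifVec n) {ω | Wn (e + 2) n ω ∈ A})) atTop := by
      apply le_liminf_of_le
      · isBoundedDefault
      filter_upwards [hl, eventually_ge_atTop 1] with n hl hn
      have := log_lower hn _ (hfin n hn) (-r' + (r' - r)) hl
      convert this using 2
      ring
    exact absurd hr1 (not_lt.2 this)
  · by_contra hcon
    push Not at hcon
    obtain ⟨r, hr1, hr2⟩ := EReal.lt_iff_exists_real_btwn.1 hcon
    have hfr := frequently_lt_of_lt_limsup (by isBoundedDefault) hr2
    have hfr2 : ∃ᶠ n : ℕ in atTop, Real.exp (-(n : ℝ) * (-r)) ≤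
        (unifVec n).real {ω | Wn (e + 2) n ω ∈ A} := by
      refine (hfr.and_eventually (eventually_ge_atTop 1)).mono ?_
      rintro n ⟨h1, hn⟩
      by_contra h2
      push Not at h2
      have := log_upper hn _ (hfin n hn) (-r) h2
      rw [neg_neg] at this
      exact absurd h1 (not_lt.2 this)
    obtain ⟨ρ, hρ, hrel, hcl⟩ := upper_real e ν hν A (-r) hfr2
    have h3 : (⨅ x ∈ closure A, coprimeRateD (e + 2) ν x) ≤ ((-r : ℝ) : EReal) := by
      refine (iInf₂_le _ hcl).trans ?_
      unfold coprimeRateD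
      exact (iInf₂_le ρ ⟨hρ, ac_Icc hsupp (relEntropy_ac hrel), rfl⟩).trans hrel
    have h4 := EReal.neg_le_neg_iff.2 h3
    rw [EReal.coe_neg, neg_neg] at h4
    exact absurd hr1 (not_lt.2 h4)

/-- For `d ≥ 2`, the empirical densities
`W_n = n^{-d} ∑_{1≤i₁,…,i_d≤n} 1_{gcd(X_{i₁},…,X_{i_d})=1}` satisfy a large
deviation principle with speed `n` and rate function `coprimeRateD d ν`, where
`ν` is the law on `[0,1]` of `∑_i B_i 2^{-i}` with independent Bernoulli`(1/p_i)`
digits `B_i` (`p_i` the `i`-th prime), pinned down by its cylinder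
probabilities: for every Borel `A ⊆ [0,1]`,
`−inf_{x∈A°} I(x) ≤ liminf_n (1/n) log P(W_n ∈ A)` and
`limsup_n (1/n) log P(W_n ∈ A) ≤ −inf_{x∈closure A} I(x)`
(with `(1/n) log P = −∞` when the probability vanishes). -/
theorem ldp_coprime_tuples (d : ℕ) (hd : 2 ≤ d)
    (ν : Measure ℝ) (hprob : IsProbabilityMeasure ν)
    (hsupp : ν (Set.Icc 0 1) = 1)
    (hν : ∀ (k : ℕ) (b : ℕ → Fin 2),
      ν {a | ∀ j < k, digit j a = (b j : ℕ)} =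
        ∏ j ∈ Finset.range k,
          (if b j = 1 then ((Nat.nth Nat.Prime j : ℝ≥0∞))⁻¹
            else 1 - ((Nat.nth Nat.Prime j : ℝ≥0∞))⁻¹))
    (A : Set ℝ) (hA : MeasurableSet A) (hA1 : A ⊆ Set.Icc 0 1) :
    -(⨅ x ∈ interior A, coprimeRateD d ν x) ≤
        Filter.liminf
          (fun n : ℕ =>
            (((n : ℝ)⁻¹ : ℝ) : EReal) *
              ENNReal.log
                ((unifVec n) {ω | (1 / (n : ℝ) ^ d) *
                  (∑ i : Fin d → Fin n,
                    if Finset.univ.gcd (fun t : Fin d => ω (i t)) = 1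
                    then (1 : ℝ) else 0) ∈ A}))
          atTop ∧
      Filter.limsup
          (fun n : ℕ =>
            (((n : ℝ)⁻¹ : ℝ) : EReal) *
              ENNReal.log
                ((unifVec n) {ω | (1 / (n : ℝ) ^ d) *
                  (∑ i : Fin d → Fin n,
                    if Finset.univ.gcd (fun t : Fin d => ω (i t)) = 1
                    then (1 : ℝ) else 0) ∈ A}))
          atTop
        ≤ -(⨅ x ∈ closure A, coprimeRateD d ν x) := by
  obtain ⟨e, rfl⟩ : ∃ e, d = e + 2 := ⟨d - 2, by omega⟩
  exact main_aux e ν hsupp (nu_cyl ν hν) A
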